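/- arXiv:2109.13215 — 2 statements merged into one kernel-verified Lean document; each statement's English description precedes it below -/
import Mathlib

section
/- Fix real exponents p > q > 1. Under the bilevel ensemble(n,p,q), let f̂ be the function learned by minimum-Σ-weighted-ℓ2-norm interpolation of constant labels 1 at the n regularly spaced points x_i = −1 + 2i/n, and let h(B,n) = (B−1+n)/2. Then there is a constant C' > 0 depending only on (p,q) such that for all n ≥ 2, the adversarial classification risk at radius 2π/h(B,n) satisfies C_adv(f̂, 2π/h(B,n)) ≤ min{1, C'·n^{q−p}}. -/
open MeasureTheory

/-- The lifted Fourier feature map `φ : ℝ → ℝ^B`,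
`φ(x) = (1/√2, sin (π x), cos (π x), …, sin (((B-1)/2) π x), cos (((B-1)/2) π x))`. -/
noncomputable def phiF (B : ℕ) (x : ℝ) : Fin B → ℝ := fun j =>
  if j.val = 0 then 1 / Real.sqrt 2
  else if j.val % 2 = 1 then Real.sin ((((j.val + 1) / 2 : ℕ) : ℝ) * Real.pi * x)
  else Real.cos (((j.val / 2 : ℕ) : ℝ) * Real.pi * x)

/-- The `n` regularly spaced training points `x_i = -1 + 2 i / n`, `i = 1, …, n`. -/
noncomputable def xtr (n : ℕ) (i : Fin n) : ℝ := -1 + 2 * ((i : ℕ) + 1 : ℝ) / (n : ℝ)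

/-- `α` interpolates the constant labels `1` at the regular grid: `Φ α = (1, …, 1)`. -/
def Interpolates (n B : ℕ) (α : Fin B → ℝ) : Prop :=
  ∀ i : Fin n, ∑ j, α j * phiF B (xtr n i) j = 1

/-- The bilevel diagonal weights: `λ₁ = γ B` with `γ = n^{-q}` on the constant feature,
and `λ_L = (1 - γ) B / (B - 1)` on all other features. -/
noncomputable def bilevelLam (n B : ℕ) (q : ℝ) : Fin B → ℝ := fun j =>
  if j.val = 0 then (n : ℝ) ^ (-q) * (B : ℝ)
  else (1 - (n : ℝ) ^ (-q)) * (B : ℝ) / ((B : ℝ) - 1)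

/-- `α̂` is a minimum-`Σ`-weighted-`ℓ₂`-norm interpolator. -/
def IsMinInterp (n B : ℕ) (lam : Fin B → ℝ) (α : Fin B → ℝ) : Prop :=
  Interpolates n B α ∧
    ∀ α' : Fin B → ℝ, Interpolates n B α' →
      ∑ j, (α j) ^ 2 / lam j ≤ ∑ j, (α' j) ^ 2 / lam j

/-- `B` is the odd integer closest to `n^p` with `2n ∣ B - 1`. -/
def BilevelB (n B : ℕ) (p : ℝ) : Prop :=
  Odd B ∧ 2 * n ∣ B - 1 ∧ |(B : ℝ) - (n : ℝ) ^ p| ≤ (n : ℝ)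

/-- `h(B,n) = (B - 1 + n)/2`. -/
noncomputable def hBn (n B : ℕ) : ℝ := ((B : ℝ) - 1 + (n : ℝ)) / 2

/-- The adversarial classification risk of `f` at radius `ε` against the constant `+1`
ground truth: `C_adv(f, ε) = (1/2) · Leb {x ∈ [-1,1] : ∃ x̃, |x̃ - x| ≤ ε ∧ f(x̃) ≤ 0}`. -/
noncomputable def advRisk (f : ℝ → ℝ) (ε : ℝ) : ℝ :=
  (volume {x ∈ Set.Icc (-1 : ℝ) 1 | ∃ y : ℝ, |y - x| ≤ ε ∧ f y ≤ 0}).toReal / 2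

/-!
The kernel `∑ⱼ λⱼ φⱼ(x) φⱼ(y)` of the weighted Fourier features is a cosine polynomial in `x - y`,
and averaging it over the grid keeps only the frequencies divisible by `n`. The averaged kernel is
constant on the grid, so the minimum-norm interpolator is a positive multiple of it. For bilevel
weights it is, in the variable `t = n (x + 1)`, equal to `λ₁ / 2 + λ_L D(t)` where `D` is a
Dirichlet sum with `|sin (π t / 2) D(t)| ≤ 1`. Hence `f̂ ≤ 0` forces
`|sin (π t / 2)| ≤ 2 λ_L / λ₁`, which is of order `n^q / B`. As `sin (π t / 2)` is
`(n π / 2)`-Lipschitz in `x`, an adversary of strength `ε` weakens this to `O(n^q / B + n ε)`, and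
the points satisfying such a bound lie in `n + 1` intervals around the zeros of the sine.
-/

open Finset Matrix

section TrigonometricSums

lemma two_mul_sin_mul_sum_cos (a b : ℝ) (n : ℕ) :
    2 * Real.sin b * ∑ i ∈ range n, Real.cos (a + 2 * b * i) =
      Real.sin (a - b + 2 * b * n) - Real.sin (a - b) := by
  have term_eq (i : ℕ) : 2 * Real.sin b * Real.cos (a + 2 * b * i) =
      Real.sin (a - b + 2 * b * (i + 1 : ℕ)) - Real.sin (a - b + 2 * b * i) := by
    rw [Real.two_mul_sin_mul_cos, ← neg_sub (a + 2 * b * i) b, Real.sin_neg]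
    push_cast
    ring_nf
  simp only [mul_sum, term_eq]
  rw [sum_range_sub (fun i : ℕ => Real.sin (a - b + 2 * b * i))]
  simp

lemma abs_sin_mul_abs_sum_cos_le_one (a b : ℝ) (n : ℕ) :
    |Real.sin b| * |∑ i ∈ range n, Real.cos (a + 2 * b * i)| ≤ 1 := by
  have h_abs := congrArg abs (two_mul_sin_mul_sum_cos a b n)
  rw [abs_mul, abs_mul, abs_two] at h_abs
  have h_sub := abs_sub (Real.sin (a - b + 2 * b * n)) (Real.sin (a - b))
  linarith [Real.abs_sin_le_one (a - b + 2 * b * n), Real.abs_sin_le_one (a - b)]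

lemma sin_natCast_mul_pi_div_eq_zero_iff {n : ℕ} (hn : n ≠ 0) (k : ℕ) :
    Real.sin (k * Real.pi / n) = 0 ↔ n ∣ k := by
  have hn' : (n : ℝ) ≠ 0 := Nat.cast_ne_zero.2 hn
  rw [Real.sin_eq_zero_iff, ← Int.natCast_dvd_natCast, dvd_iff_exists_eq_mul_left]
  refine exists_congr fun z => ?_
  rw [eq_div_iff hn', mul_right_comm, mul_left_inj' Real.pi_ne_zero, eq_comm]
  exact_mod_cast Iff.rfl

lemma sum_cos_mul_sub_xtr {n : ℕ} (hn : n ≠ 0) (k : ℕ) (x : ℝ) :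
    ∑ i, Real.cos (k * Real.pi * (x - xtr n i)) =
      if n ∣ k then n * Real.cos (k * Real.pi * (x + 1)) else 0 := by
  have hn' : (n : ℝ) ≠ 0 := Nat.cast_ne_zero.2 hn
  split_ifs with hk
  · obtain ⟨l, rfl⟩ := hk
    have term_eq (i : Fin n) : Real.cos ((n * l : ℕ) * Real.pi * (x - xtr n i)) =
        Real.cos ((n * l : ℕ) * Real.pi * (x + 1)) := by
      rw [← Real.cos_sub_nat_mul_two_pi ((n * l : ℕ) * Real.pi * (x + 1)) (l * (i + 1))]
      congr 1
      simp only [xtr]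
      push_cast
      field_simp
      ring
    simp only [term_eq, sum_const, card_univ, Fintype.card_fin, nsmul_eq_mul]
  · set b : ℝ := -(k * Real.pi / n)
    set a : ℝ := k * Real.pi * (x + 1) + 2 * b
    have term_eq (i : Fin n) :
        Real.cos (k * Real.pi * (x - xtr n i)) = Real.cos (a + 2 * b * (i : ℕ)) := by
      simp only [a, b, xtr]
      congr 1
      field_simp
      ring
    have sin_b_ne_zero : Real.sin b ≠ 0 := by
      rwa [Real.sin_neg, neg_ne_zero, Ne, sin_natCast_mul_pi_div_eq_zero_iff hn]
    have full_turn : a - b + 2 * b * n = a - b - k * (2 * Real.pi) := by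
      simp only [b]
      field_simp
      ring
    have h := two_mul_sin_mul_sum_cos a b n
    rw [full_turn, Real.sin_sub_nat_mul_two_pi, sub_self] at h
    simp_rw [term_eq, Fin.sum_univ_eq_sum_range (fun i : ℕ => Real.cos (a + 2 * b * i))]
    simpa [sin_b_ne_zero] using h

end TrigonometricSums

lemma sum_range_mul_ite_dvd_succ {M : Type*} [AddCommMonoid M] {n : ℕ} (hn : n ≠ 0) (g : ℕ → M)
    (m : ℕ) :
    ∑ k ∈ range (n * m), (if n ∣ k + 1 then g (k + 1) else 0) =
      ∑ l ∈ range m, g (n * (l + 1)) := by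
  have succ_eq (l : ℕ) : n * l + (n - 1) + 1 = n * (l + 1) := by rw [mul_add_one]; omega
  refine (sum_of_injOn (fun l => n * l + (n - 1)) ?_ ?_ ?_ ?_).symm
  · intro l _ l' _ h
    exact Nat.eq_of_mul_eq_mul_left (Nat.pos_of_ne_zero hn) (Nat.add_right_cancel h)
  · intro l hl
    have h_le : n * (l + 1) ≤ n * m := Nat.mul_le_mul_left n (mem_range.1 hl)
    have := succ_eq l
    exact mem_range.2 (by dsimp only; omega)
  · intro k hk hk_image
    refine if_neg ?_
    rintro ⟨_ | l, hl⟩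
    · omega
    · have hk_eq : k = n * l + (n - 1) := Nat.add_right_cancel (hl.trans (succ_eq l).symm)
      have hlm : n * l < n * m := by have := mem_range.1 hk; omega
      exact hk_image ⟨l, mem_range.2 (Nat.lt_of_mul_lt_mul_left hlm), hk_eq.symm⟩
  · intro l _
    simp only [succ_eq, dvd_mul_right, if_true]

section CosPoly

/-- The cosine polynomial `w₀ / 2 + ∑_{k = 1}^K w_k cos (k π t)`. With `t = x - y` it is the kernel
of the Fourier features up to frequency `K`, where `w_k` is the weight of the frequency `k`. -/
noncomputable def cosPoly (w : ℕ → ℝ) (K : ℕ) (t : ℝ) : ℝ :=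
  w 0 / 2 + ∑ k ∈ range K, w (k + 1) * Real.cos ((k + 1 : ℕ) * Real.pi * t)

/-- Feature weights that depend on the frequency only: the features `2 k - 1` and `2 k` are the sine
and the cosine of frequency `k`. -/
def freqWeights (B : ℕ) (w : ℕ → ℝ) (j : Fin B) : ℝ := w ((j + 1) / 2)

lemma sum_freqWeights_mul_phiF_mul_phiF (w : ℕ → ℝ) (K : ℕ) (x y : ℝ) :
    ∑ j, freqWeights (2 * K + 1) w j * phiF _ y j * phiF _ x j = cosPoly w K (x - y) := by
  induction K with
  | zero =>
    have h_const : (1 / √2 : ℝ) * (1 / √2) = 1 / 2 := by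
      rw [div_mul_div_comm, Real.mul_self_sqrt zero_le_two, one_mul]
    rw [Fin.sum_univ_one]
    change w 0 * (1 / √2) * (1 / √2) = w 0 / 2 + 0
    linear_combination w 0 * h_const
  | succ K ih =>
    have h_sin (z : ℝ) : phiF (2 * (K + 1) + 1) z (Fin.last (2 * K + 1)).castSucc =
        Real.sin ((K + 1 : ℕ) * Real.pi * z) := by
      simp [phiF, Nat.add_mod, show (2 * K + 1 + 1) / 2 = K + 1 by omega]
    have h_cos (z : ℝ) : phiF (2 * (K + 1) + 1) z (Fin.last (2 * K + 2)) =
        Real.cos ((K + 1 : ℕ) * Real.pi * z) := by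
      simp [phiF]
    have h_weight_sin : freqWeights (2 * (K + 1) + 1) w (Fin.last (2 * K + 1)).castSucc =
        w (K + 1) := congrArg w (by simp only [Fin.val_castSucc, Fin.val_last]; omega)
    have h_weight_cos : freqWeights (2 * (K + 1) + 1) w (Fin.last (2 * K + 2)) = w (K + 1) :=
      congrArg w (by simp only [Fin.val_last]; omega)
    change ∑ j : Fin (2 * K + 1 + 1 + 1), _ = _
    rw [Fin.sum_univ_castSucc, Fin.sum_univ_castSucc, h_sin, h_sin, h_cos, h_cos, h_weight_sin,
      h_weight_cos]
    change ∑ j, freqWeights (2 * K + 1) w j * phiF _ y j * phiF _ x j + _ + _ = _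
    rw [ih, cosPoly, cosPoly, sum_range_succ, mul_sub ((K + 1 : ℕ) * Real.pi), Real.cos_sub]
    ring

lemma sum_cosPoly_sub_xtr {n : ℕ} (hn : n ≠ 0) (w : ℕ → ℝ) (m : ℕ) (x : ℝ) :
    ∑ i, cosPoly w (n * m) (x - xtr n i) =
      n * cosPoly (fun l => w (n * l)) m (n * (x + 1)) := by
  simp only [cosPoly, sum_add_distrib, sum_comm (s := univ), ← mul_sum, sum_cos_mul_sub_xtr hn,
    mul_ite, mul_zero]
  rw [sum_range_mul_ite_dvd_succ hn (fun k => w k * (n * Real.cos (k * Real.pi * (x + 1))))]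
  have cos_eq (l : ℕ) : Real.cos ((n * (l + 1) : ℕ) * Real.pi * (x + 1)) =
      Real.cos ((l + 1 : ℕ) * Real.pi * (n * (x + 1))) := by
    push_cast
    ring_nf
  simp only [cos_eq, mul_left_comm _ (n : ℝ), ← mul_sum, sum_const, card_univ, Fintype.card_fin,
    nsmul_eq_mul]
  ring

lemma cosPoly_zero_pos {w : ℕ → ℝ} (hw : ∀ k, 0 < w k) (K : ℕ) : 0 < cosPoly w K 0 := by
  simp only [cosPoly, mul_zero, Real.cos_zero, mul_one]
  exact add_pos_of_pos_of_nonneg (half_pos (hw 0)) (sum_nonneg fun k _ => (hw (k + 1)).le)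

lemma cosPoly_two_mul_natCast (w : ℕ → ℝ) (K r : ℕ) : cosPoly w K (2 * r) = cosPoly w K 0 := by
  have cos_eq_one (k : ℕ) : Real.cos (k * Real.pi * (2 * r)) = 1 := by
    rw [← Real.cos_nat_mul_two_pi (k * r)]
    push_cast
    ring_nf
  simp only [cosPoly, cos_eq_one, mul_zero, Real.cos_zero]

lemma abs_sin_mul_le_of_cosPoly_nonpos {w : ℕ → ℝ} {b : ℝ} (hb : 0 ≤ b)
    (hw : ∀ k, w (k + 1) = b) {K : ℕ} {t : ℝ} (ht : cosPoly w K t ≤ 0) :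
    |Real.sin (Real.pi * t / 2)| * w 0 ≤ 2 * b := by
  set D := ∑ k ∈ range K, Real.cos ((k + 1 : ℕ) * Real.pi * t) with hD
  have h_eval : cosPoly w K t = w 0 / 2 + b * D := by simp only [cosPoly, hw, hD, mul_sum]
  have h_dirichlet : |Real.sin (Real.pi * t / 2)| * |D| ≤ 1 := by
    convert abs_sin_mul_abs_sum_cos_le_one (Real.pi * t) (Real.pi * t / 2) K using 5 with k
    push_cast
    ring
  calc |Real.sin (Real.pi * t / 2)| * w 0
      ≤ |Real.sin (Real.pi * t / 2)| * (2 * b * |D|) := by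
        gcongr
        nlinarith [neg_abs_le D]
    _ = 2 * b * (|Real.sin (Real.pi * t / 2)| * |D|) := by ring
    _ ≤ 2 * b := mul_le_of_le_one_right (by positivity) h_dirichlet

end CosPoly

section MinimumNorm

variable {ι κ : Type*} [Fintype ι] [Fintype κ]

lemma sum_sq_div_eq_add_of_mulVec_eq {M : Matrix κ ι ℝ} {lam α : ι → ℝ} (hlam : ∀ j, lam j ≠ 0)
    {c : κ → ℝ} (hα : M *ᵥ α = M *ᵥ (lam * (c ᵥ* M))) :
    ∑ j, α j ^ 2 / lam j = ∑ j, (lam * (c ᵥ* M)) j ^ 2 / lam j +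
      ∑ j, (α j - (lam * (c ᵥ* M)) j) ^ 2 / lam j := by
  set β := lam * (c ᵥ* M) with hβ
  have h_orth : (c ᵥ* M) ⬝ᵥ (α - β) = 0 := by
    rw [← dotProduct_mulVec, mulVec_sub, hα, sub_self, dotProduct_zero]
  have h_expand (j : ι) : α j ^ 2 / lam j =
      β j ^ 2 / lam j + (α j - β j) ^ 2 / lam j + 2 * ((c ᵥ* M) j * (α - β) j) := by
    have := hlam j
    simp only [hβ, Pi.mul_apply, Pi.sub_apply]
    field_simp
    ring
  simp only [h_expand, sum_add_distrib, ← mul_sum]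
  rw [← dotProduct, h_orth, mul_zero, add_zero]

lemma eq_mul_vecMul_of_sum_sq_div_le {M : Matrix κ ι ℝ} {lam α : ι → ℝ} (hlam : ∀ j, 0 < lam j)
    {c : κ → ℝ} (hα : M *ᵥ α = M *ᵥ (lam * (c ᵥ* M)))
    (hle : ∑ j, α j ^ 2 / lam j ≤ ∑ j, (lam * (c ᵥ* M)) j ^ 2 / lam j) :
    α = lam * (c ᵥ* M) := by
  have h_nonneg (j : ι) (_ : j ∈ univ) : 0 ≤ (α j - (lam * (c ᵥ* M)) j) ^ 2 / lam j :=
    div_nonneg (sq_nonneg _) (hlam j).le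
  have h_sum : ∑ j, (α j - (lam * (c ᵥ* M)) j) ^ 2 / lam j = 0 :=
    le_antisymm (by linarith [sum_sq_div_eq_add_of_mulVec_eq (fun j => (hlam j).ne') hα])
      (sum_nonneg h_nonneg)
  funext j
  have h_term := (sum_eq_zero_iff_of_nonneg h_nonneg).1 h_sum j (mem_univ j)
  simpa [(hlam j).ne', sub_eq_zero] using h_term

end MinimumNorm

section Interpolator

/-- The `n × B` design matrix `Φ`, whose rows are the features `φ(xᵢ)` of the training points. -/
noncomputable def designMatrix (n B : ℕ) : Matrix (Fin n) (Fin B) ℝ :=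
  .of fun i => phiF B (xtr n i)

lemma interpolates_iff_mulVec_eq {n B : ℕ} {α : Fin B → ℝ} :
    Interpolates n B α ↔ designMatrix n B *ᵥ α = 1 := by
  simp only [Interpolates, funext_iff, mulVec, dotProduct, designMatrix, of_apply, Pi.one_apply,
    mul_comm]

lemma sum_freqWeights_mul_vecMul_mul_phiF (n K : ℕ) (w : ℕ → ℝ) (c : Fin n → ℝ) (x : ℝ) :
    ∑ j, (freqWeights (2 * K + 1) w * (c ᵥ* designMatrix n (2 * K + 1)) : Fin _ → ℝ) j *
        phiF (2 * K + 1) x j =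
      ∑ i, c i * cosPoly w K (x - xtr n i) := by
  simp only [← sum_freqWeights_mul_phiF_mul_phiF, Pi.mul_apply, vecMul, dotProduct, designMatrix,
    of_apply, mul_sum, sum_mul]
  rw [sum_comm]
  refine sum_congr rfl fun i _ => sum_congr rfl fun j _ => ?_
  ring

theorem IsMinInterp.apply_eq_cosPoly_div {n : ℕ} (hn : n ≠ 0) {m : ℕ} {w : ℕ → ℝ}
    (hw : ∀ k, 0 < w k) {α : Fin (2 * (n * m) + 1) → ℝ}
    (hα : IsMinInterp n _ (freqWeights _ w) α) (x : ℝ) :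
    ∑ j, α j * phiF _ x j =
      cosPoly (fun l => w (n * l)) m (n * (x + 1)) / cosPoly (fun l => w (n * l)) m 0 := by
  have hn' : (n : ℝ) ≠ 0 := Nat.cast_ne_zero.2 hn
  set G := cosPoly (fun l => w (n * l)) m with hG_def
  have hG : G 0 ≠ 0 := (cosPoly_zero_pos (fun l => hw (n * l)) m).ne'
  set c : ℝ := (n * G 0)⁻¹ with hc
  set β : Fin (2 * (n * m) + 1) → ℝ :=
    freqWeights _ w * ((fun _ => c) ᵥ* designMatrix n _) with hβ
  have hβ_apply (x : ℝ) : ∑ j, β j * phiF _ x j = G (n * (x + 1)) / G 0 := by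
    rw [hβ, sum_freqWeights_mul_vecMul_mul_phiF, ← mul_sum, sum_cosPoly_sub_xtr hn, ← hG_def, hc]
    field_simp
  have hβ_interp : Interpolates n _ β := fun i => by
    have h_grid : (n : ℝ) * (xtr n i + 1) = 2 * (i + 1 : ℕ) := by
      simp only [xtr]
      push_cast
      field_simp
      ring
    rw [hβ_apply, h_grid, hG_def, cosPoly_two_mul_natCast, div_self hG]
  have hαβ : α = β := eq_mul_vecMul_of_sum_sq_div_le (fun j => hw _)
    ((interpolates_iff_mulVec_eq.1 hα.1).trans (interpolates_iff_mulVec_eq.1 hβ_interp).symm)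
    (hα.2 β hβ_interp)
  rw [hαβ, hβ_apply]

/-- The bilevel weights as a function of the frequency instead of the feature index. -/
noncomputable def bilevelFreqWeight (n B : ℕ) (q : ℝ) (k : ℕ) : ℝ :=
  if k = 0 then (n : ℝ) ^ (-q) * B else (1 - (n : ℝ) ^ (-q)) * B / (B - 1)

lemma bilevelLam_eq_freqWeights (n B : ℕ) (q : ℝ) :
    bilevelLam n B q = freqWeights B (bilevelFreqWeight n B q) := by
  funext j
  have h : (j.val + 1) / 2 = 0 ↔ j.val = 0 := by omega
  simp only [bilevelLam, freqWeights, bilevelFreqWeight, h]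

variable {n B : ℕ} {q : ℝ}

lemma bilevelFreqWeight_pos (hn : 2 ≤ n) (hB : 1 < B) (hq : 0 < q) (k : ℕ) :
    0 < bilevelFreqWeight n B q k := by
  have hn' : (1 : ℝ) < n := by exact_mod_cast hn
  have hB' : (1 : ℝ) < B := by exact_mod_cast hB
  have hγ : (n : ℝ) ^ (-q) < 1 := Real.rpow_lt_one_of_one_lt_of_neg hn' (neg_lt_zero.2 hq)
  unfold bilevelFreqWeight
  split_ifs
  · positivity
  · exact div_pos (mul_pos (sub_pos.2 hγ) (by positivity)) (sub_pos.2 hB')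

theorem IsMinInterp.abs_sin_le_of_apply_nonpos {m : ℕ} (hn : 2 ≤ n) (hm : m ≠ 0) (hq : 0 < q)
    (hB : B = 2 * (n * m) + 1) {α : Fin B → ℝ} (hα : IsMinInterp n B (bilevelLam n B q) α) {y : ℝ}
    (hy : ∑ j, α j * phiF B y j ≤ 0) :
    |Real.sin (n * Real.pi * (y + 1) / 2)| ≤ 2 * (n : ℝ) ^ q / (B - 1) := by
  subst hB
  set B := 2 * (n * m) + 1
  have hn0 : n ≠ 0 := by omega
  have hB : 1 < B := by have := Nat.mul_pos (Nat.pos_of_ne_zero hn0) (Nat.pos_of_ne_zero hm); omega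
  have hw := bilevelFreqWeight_pos hn hB hq
  have hB' : (0 : ℝ) < B - 1 := sub_pos.2 (by exact_mod_cast hB)
  have hQ : 0 < (n : ℝ) ^ q := Real.rpow_pos_of_pos (by positivity) _
  rw [bilevelLam_eq_freqWeights] at hα
  rw [hα.apply_eq_cosPoly_div hn0 hw] at hy
  have h_kernel : cosPoly (fun l => bilevelFreqWeight n B q (n * l)) m (n * (y + 1)) ≤ 0 :=
    not_lt.1 fun h => hy.not_gt (div_pos h (cosPoly_zero_pos (fun l => hw (n * l)) m))
  have h_sin := abs_sin_mul_le_of_cosPoly_nonpos (hw 1).le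
    (fun l => by simp [bilevelFreqWeight, hn0]) h_kernel
  simp only [bilevelFreqWeight, mul_zero, if_true, one_ne_zero, if_false,
    Real.rpow_neg n.cast_nonneg] at h_sin
  rw [show Real.pi * (n * (y + 1)) / 2 = n * Real.pi * (y + 1) / 2 by ring] at h_sin
  set s := |Real.sin (n * Real.pi * (y + 1) / 2)|
  calc s = s * (((n : ℝ) ^ q)⁻¹ * B) * ((n : ℝ) ^ q / B) := by field_simp
    _ ≤ 2 * ((1 - ((n : ℝ) ^ q)⁻¹) * B / (B - 1)) * ((n : ℝ) ^ q / B) :=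
      mul_le_mul_of_nonneg_right h_sin (by positivity)
    _ = 2 * ((n : ℝ) ^ q - 1) / (B - 1) := by field_simp
    _ ≤ 2 * (n : ℝ) ^ q / (B - 1) := by gcongr; linarith

end Interpolator

section RiskBound

lemma two_mul_abs_sub_round_le_abs_sin (t : ℝ) : 2 * |t - round t| ≤ |Real.sin (Real.pi * t)| := by
  have h_small : |Real.pi * (t - round t)| ≤ Real.pi / 2 := by
    rw [abs_mul, abs_of_pos Real.pi_pos]
    nlinarith [abs_sub_round t, Real.pi_pos]
  calc 2 * |t - round t| = 2 / Real.pi * |Real.pi * (t - round t)| := by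
        rw [abs_mul, abs_of_pos Real.pi_pos]
        field_simp
    _ ≤ |Real.sin (Real.pi * (t - round t))| := Real.mul_abs_le_abs_sin h_small
    _ = |Real.sin (Real.pi * t)| := by
        rw [mul_sub, mul_comm Real.pi (round t : ℝ), Real.sin_sub_int_mul_pi, abs_mul]
        simp

lemma setOf_abs_sin_le_subset_biUnion_closedBall {n : ℕ} (hn : n ≠ 0) (η : ℝ) :
    {x ∈ Set.Icc (-1 : ℝ) 1 | |Real.sin (n * Real.pi * (x + 1) / 2)| ≤ η} ⊆
      ⋃ k ∈ range (n + 1), Metric.closedBall (2 * (k : ℝ) / n - 1) (η / n) := by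
  rintro x ⟨⟨hx_ge, hx_le⟩, hx⟩
  set t : ℝ := n * (x + 1) / 2 with ht
  have h_round : 2 * |t - round t| ≤ η := by
    refine (two_mul_abs_sub_round_le_abs_sin t).trans (le_of_eq_of_le ?_ hx)
    rw [ht]
    ring_nf
  have ht_mem : t ∈ Set.Icc 0 (n : ℝ) := by
    have hx_nonneg : 0 ≤ x + 1 := by linarith
    have hn_mul : n * (x + 1) ≤ n * 2 := by gcongr; linarith
    exact ⟨by positivity, by linarith⟩
  obtain ⟨k, hk⟩ : ∃ k : ℕ, round t = k := Int.eq_ofNat_of_zero_le <| by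
    rw [round_eq]
    exact Int.floor_nonneg.2 (by linarith [ht_mem.1])
  have h_dist := abs_sub_round t
  rw [hk, Int.cast_natCast] at h_round h_dist
  have hkn : k < n + 1 := by
    have : (k : ℝ) < n + 1 := by linarith [(abs_le.1 h_dist).1, ht_mem.2]
    exact_mod_cast this
  have h_center : x - (2 * (k : ℝ) / n - 1) = 2 * (t - k) / n := by
    rw [ht]
    field_simp
    ring
  refine Set.mem_biUnion (mem_range.2 hkn) ?_
  rw [Metric.mem_closedBall, Real.dist_eq, h_center, abs_div, abs_mul, abs_two, Nat.abs_cast]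
  gcongr

lemma volume_real_setOf_abs_sin_le {n : ℕ} (hn : n ≠ 0) {η : ℝ} (hη : 0 ≤ η) :
    volume.real {x ∈ Set.Icc (-1 : ℝ) 1 | |Real.sin (n * Real.pi * (x + 1) / 2)| ≤ η} ≤ 4 * η := by
  have hn' : (1 : ℝ) ≤ n := Nat.one_le_cast.2 (Nat.one_le_iff_ne_zero.2 hn)
  calc _ ≤ volume.real (⋃ k ∈ range (n + 1), Metric.closedBall (2 * (k : ℝ) / n - 1) (η / n)) :=
        measureReal_mono (setOf_abs_sin_le_subset_biUnion_closedBall hn η)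
          (measure_biUnion_lt_top (range (n + 1)).finite_toSet fun _ _ =>
            measure_closedBall_lt_top).ne
    _ ≤ ∑ k ∈ range (n + 1), volume.real (Metric.closedBall (2 * (k : ℝ) / n - 1) (η / n)) :=
        measureReal_biUnion_finset_le _ _
    _ = (n + 1) * (2 * (η / n)) := by
        simp only [Real.volume_real_closedBall (div_nonneg hη (Nat.cast_nonneg n)), sum_const,
          card_range, nsmul_eq_mul, Nat.cast_add_one]
    _ = 2 * η + 2 * η / n := by field_simp
    _ ≤ 4 * η := by linarith [div_le_self (by positivity : 0 ≤ 2 * η) hn']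

lemma advRisk_le_one (f : ℝ → ℝ) (ε : ℝ) : advRisk f ε ≤ 1 := by
  have h := measureReal_mono (μ := volume) (Set.sep_subset (Set.Icc (-1 : ℝ) 1)
    fun x => ∃ y : ℝ, |y - x| ≤ ε ∧ f y ≤ 0) measure_Icc_lt_top.ne
  rw [Real.volume_real_Icc_of_le (by norm_num)] at h
  change volume.real _ / 2 ≤ 1
  linarith

lemma abs_sin_le_abs_sin_add_abs_sub (u v : ℝ) : |Real.sin u| ≤ |Real.sin v| + |u - v| := by
  have h_lip := Real.lipschitzWith_sin.dist_le_mul u v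
  rw [NNReal.coe_one, one_mul, Real.dist_eq, Real.dist_eq] at h_lip
  linarith [abs_sub_abs_le_abs_sub (Real.sin u) (Real.sin v)]

lemma advRisk_le_of_abs_sin_le {n : ℕ} (hn : n ≠ 0) {f : ℝ → ℝ} {δ ε : ℝ} (hδ : 0 ≤ δ) (hε : 0 ≤ ε)
    (hf : ∀ y, f y ≤ 0 → |Real.sin (n * Real.pi * (y + 1) / 2)| ≤ δ) :
    advRisk f ε ≤ 2 * δ + n * Real.pi * ε := by
  have h_subset : {x ∈ Set.Icc (-1 : ℝ) 1 | ∃ y : ℝ, |y - x| ≤ ε ∧ f y ≤ 0} ⊆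
      {x ∈ Set.Icc (-1 : ℝ) 1 |
        |Real.sin (n * Real.pi * (x + 1) / 2)| ≤ δ + n * Real.pi / 2 * ε} := by
    rintro x ⟨hx, y, hyx, hy⟩
    refine ⟨hx, (abs_sin_le_abs_sin_add_abs_sub _ (n * Real.pi * (y + 1) / 2)).trans ?_⟩
    have h_arg : |n * Real.pi * (x + 1) / 2 - n * Real.pi * (y + 1) / 2| =
        n * Real.pi / 2 * |y - x| := by
      have h_factor : n * Real.pi * (y + 1) / 2 - n * Real.pi * (x + 1) / 2 =
          n * Real.pi / 2 * (y - x) := by ring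
      rw [abs_sub_comm, h_factor, abs_mul, abs_of_nonneg (by positivity)]
    rw [h_arg]
    gcongr
    exact hf y hy
  have h_volume := (measureReal_mono (μ := volume) h_subset
    (measure_ne_top_of_subset (Set.sep_subset _ _) measure_Icc_lt_top.ne)).trans
    (volume_real_setOf_abs_sin_le hn (by positivity))
  change volume.real _ / 2 ≤ _
  linarith

end RiskBound

section BilevelEnsemble

lemma natCast_le_rpow_max_one {n : ℕ} (hn : 1 ≤ n) (q : ℝ) : (n : ℝ) ≤ (n : ℝ) ^ max q 1 := by
  simpa only [Real.rpow_one] using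
    Real.rpow_le_rpow_of_exponent_le (Nat.one_le_cast.2 hn) (le_max_right q 1)

lemma BilevelB.exists_eq {n B : ℕ} {p : ℝ} (hB : BilevelB n B p) :
    ∃ m, B = 2 * (n * m) + 1 := by
  obtain ⟨⟨r, hr⟩, ⟨m, hm⟩, -⟩ := hB
  rw [mul_assoc] at hm
  exact ⟨m, by omega⟩

lemma BilevelB.half_rpow_le_sub_one {n B : ℕ} {p : ℝ} (hB : BilevelB n B p) (hn : 1 ≤ n)
    (h : 4 * (n : ℝ) ≤ (n : ℝ) ^ p) : (n : ℝ) ^ p / 2 ≤ B - 1 := by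
  obtain ⟨-, -, h_close⟩ := hB
  have hn' : (1 : ℝ) ≤ n := Nat.one_le_cast.2 hn
  linarith [(abs_le.1 h_close).1]

theorem IsMinInterp.advRisk_le {n B m : ℕ} {q ε : ℝ} (hn : 2 ≤ n) (hm : m ≠ 0) (hq : 0 < q)
    (hB : B = 2 * (n * m) + 1) (hε : 0 ≤ ε) {α : Fin B → ℝ}
    (hα : IsMinInterp n B (bilevelLam n B q) α) :
    advRisk (fun x => ∑ j, α j * phiF B x j) ε ≤
      4 * (n : ℝ) ^ q / (B - 1) + n * Real.pi * ε := by
  have hB' : (0 : ℝ) ≤ B - 1 := by rw [hB]; push_cast; linarith [show (0 : ℝ) ≤ n * m by positivity]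
  refine (advRisk_le_of_abs_sin_le (by omega : n ≠ 0) (δ := 2 * (n : ℝ) ^ q / (B - 1))
    (by positivity) hε fun y hy => hα.abs_sin_le_of_apply_nonpos hn hm hq hB hy).trans_eq ?_
  ring

lemma BilevelB.advRisk_le_mul_rpow_div {n B : ℕ} {p q : ℝ} (hn : 2 ≤ n) (hq : 0 < q)
    (hB : BilevelB n B p) (hB_one : 1 < B) {α : Fin B → ℝ}
    (hα : IsMinInterp n B (bilevelLam n B q) α) :
    advRisk (fun x => ∑ j, α j * phiF B x j) (2 * Real.pi / hBn n B) ≤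
      (4 + 4 * Real.pi ^ 2) * ((n : ℝ) ^ max q 1 / (B - 1)) := by
  obtain ⟨m, hm⟩ := hB.exists_eq
  have hB_pos : (0 : ℝ) < B - 1 := sub_pos.2 (by exact_mod_cast hB_one)
  have hn' : (1 : ℝ) ≤ n := by exact_mod_cast (by omega : 1 ≤ n)
  have hh : (B - 1) / 2 ≤ hBn n B := by
    unfold hBn
    linarith
  have hh_pos : 0 < hBn n B := (half_pos hB_pos).trans_le hh
  calc advRisk (fun x => ∑ j, α j * phiF B x j) (2 * Real.pi / hBn n B)
      ≤ 4 * (n : ℝ) ^ q / (B - 1) + n * Real.pi * (2 * Real.pi / hBn n B) :=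
        hα.advRisk_le hn (by rintro rfl; omega) hq hm (by positivity)
    _ ≤ 4 * (n : ℝ) ^ max q 1 / (B - 1) +
          (n : ℝ) ^ max q 1 * Real.pi * (2 * Real.pi / ((B - 1) / 2)) := by
        gcongr
        · exact le_max_left q 1
        · exact natCast_le_rpow_max_one (by omega) q
    _ = (4 + 4 * Real.pi ^ 2) * ((n : ℝ) ^ max q 1 / (B - 1)) := by
        field_simp
        ring

end BilevelEnsemble

-- `n ^ (1 - p)` is the rate contributed by the adversary and `n ^ (q - p)` the one contributed by
-- the sign changes of `f̂`; the latter dominates for `1 ≤ q`.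
theorem stmt_7_general :
    ∃ C' : ℝ, 0 < C' ∧ ∀ p q : ℝ, 0 < q → ∀ n : ℕ, 2 ≤ n → ∀ B : ℕ, BilevelB n B p →
      ∀ αhat : Fin B → ℝ, IsMinInterp n B (bilevelLam n B q) αhat →
        advRisk (fun x => ∑ j, αhat j * phiF B x j) (2 * Real.pi / hBn n B) ≤
          min 1 (C' * (n : ℝ) ^ (max q 1 - p)) := by
  refine ⟨8 + 8 * Real.pi ^ 2, by positivity, fun p q hq n hn B hB α hα =>
    le_min (advRisk_le_one _ _) ?_⟩
  have hn0 : (0 : ℝ) < n := by exact_mod_cast (by omega : 0 < n)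
  rw [Real.rpow_sub hn0]
  have hP : 0 < (n : ℝ) ^ p := by positivity
  rcases lt_or_ge ((n : ℝ) ^ p) (4 * n) with h_trivial | h_large
  · have h_ratio : 1 / 4 ≤ (n : ℝ) ^ max q 1 / (n : ℝ) ^ p := by
      rw [le_div_iff₀ hP]
      linarith [natCast_le_rpow_max_one (by omega : 1 ≤ n) q]
    exact (advRisk_le_one _ _).trans (by nlinarith [sq_nonneg Real.pi])
  · have hB_lower := hB.half_rpow_le_sub_one (by omega) h_large
    have hB_one : 1 < B := Nat.one_lt_cast.1 (by linarith : (1 : ℝ) < B)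
    calc _ ≤ (4 + 4 * Real.pi ^ 2) * ((n : ℝ) ^ max q 1 / (B - 1)) :=
          hB.advRisk_le_mul_rpow_div hn hq hB_one hα
      _ ≤ (4 + 4 * Real.pi ^ 2) * ((n : ℝ) ^ max q 1 / ((n : ℝ) ^ p / 2)) := by gcongr
      _ = (8 + 8 * Real.pi ^ 2) * ((n : ℝ) ^ max q 1 / (n : ℝ) ^ p) := by
          field_simp
          ring

/-- **Adversarial risk at radius `2π/h(B,n)` in the bilevel ensemble.**  Fix `p > q > 1`.
There is a constant `C' > 0` depending only on `(p, q)` such that for all `n ≥ 2`, the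
minimum-`Σ`-weighted-`ℓ₂`-norm interpolator `f̂` of constant labels at the `n` regularly
spaced points satisfies `C_adv(f̂, 2π/h(B,n)) ≤ min 1 (C' n^{q-p})`. -/
theorem stmt_7 (p q : ℝ) (hq : 1 < q) (hpq : q < p) :
    ∃ C' : ℝ, 0 < C' ∧ ∀ n : ℕ, 2 ≤ n → ∀ B : ℕ, BilevelB n B p →
      ∀ αhat : Fin B → ℝ, IsMinInterp n B (bilevelLam n B q) αhat →
        advRisk (fun x => ∑ j, αhat j * phiF B x j) (2 * Real.pi / hBn n B) ≤
          min 1 (C' * (n : ℝ) ^ (q - p)) := by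
  obtain ⟨C', hC', h⟩ := stmt_7_general
  exact ⟨C', hC', by simpa only [max_eq_left hq.le] using h p q (one_pos.trans hq)⟩
end

section
/- Fix real exponents p > 1, q > 1 and T > 6p − 1. For each n, let f̂_n be the minimum-Σ-weighted-ℓ2-norm Fourier interpolator of constant labels at the n regularly spaced points, and let ĝ_n be the minimum-ℓ2-norm interpolator built on d = n^T random-Fourier-sum (RFS) features whose Gaussian weight vectors are i.i.d. N(0, Σ(n,p,q)). Then the classification risk of ĝ_n converges to that of f̂_n: for every δ > 0, the probability (over the Gaussian weights) that |C(ĝ_n) − C(f̂_n)| > δ tends to 0 as n → ∞; in particular lim_{n→∞} C(ĝ_n) = lim_{n→∞} C(f̂_n) in probability. -/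
open MeasureTheory Filter ProbabilityTheory

/-- The classification 0-1 risk of `f` against the constant `+1` ground truth. -/
noncomputable def classRisk (f : ℝ → ℝ) : ℝ :=
  (volume {x ∈ Set.Icc (-1 : ℝ) 1 | f x ≤ 0}).toReal / 2

/-- The RFS learned function `ĝ(x) = ∑_i β_i ⟨z_i, φ(x)⟩`, for coefficients `β` on the
RFS features generated by the Gaussian weight matrix `W` (rows `z_i ∈ ℝ^B`). -/
noncomputable def rfsFun (B d : ℕ) (W : Fin d → Fin B → ℝ) (β : Fin d → ℝ) (x : ℝ) : ℝ :=
  ∑ i, β i * ∑ j, W i j * phiF B x j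

/-- `β` interpolates the constant labels `1` on the RFS features: `Φ^RFS β = (1, …, 1)`. -/
def RFSInterpolates (n B d : ℕ) (W : Fin d → Fin B → ℝ) (β : Fin d → ℝ) : Prop :=
  ∀ i : Fin n, rfsFun B d W β (xtr n i) = 1

/-- The distribution of the RFS weight matrix: `d` i.i.d. rows, each row Gaussian
`N(0, Σ(n,p,q))` in `ℝ^B` (with `Σ` diagonal, so the row is a product of scalar
Gaussians `N(0, λ_j)`). -/
noncomputable def rfsMeasure (n B d : ℕ) (q : ℝ) : Measure (Fin d → Fin B → ℝ) :=
  Measure.pi fun _ : Fin d =>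
    Measure.pi fun j : Fin B => gaussianReal 0 (bilevelLam n B q j).toNNReal

/-!
For `B = 2nm + 1` the Fourier interpolator is explicit: it is proportional to
`a + cos θ + ⋯ + cos (m θ)` with `θ = n π (x + 1)` and `a / m → 0`.  Multiplied by `sin (θ / 2)` it
becomes a multiple of `sin ((m + 1 / 2) θ)` plus a slowly varying term, so it is rarely small.

A second moment bound on the entries of `Wᵀ W - d Σ` shows that the sample covariance `Wᵀ W / d`
of the RFS weights is within relative error `ρ` of `Σ` outside an event of probability
`O(B² / (d ρ²))`.  Then the smallest `‖β‖²` with `Wᵀ β = u` is `‖Σ^{-1/2} u‖² / d` up to a factor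
`1 ± O(ρ)`, so `Wᵀ β̂` is an interpolator of nearly minimal `Σ`-norm, and the Pythagorean
identity around `α̂` makes it close to `α̂` in that norm.  Hence `ĝ` is uniformly within `√(4ρn)`
of `f̂`, and the risks differ by at most the measure of the set where `|f̂|` is below that level.
The choice `ρ = ε² / (n m²)` makes the gap at most about `4√ε`, with failure probability
`O(B⁶ / (n² d))` for fixed `ε`.
-/

open Asymptotics Topology
open scoped Matrix

section WeightedForms

variable {ι κ : Type*} [Fintype ι] [Fintype κ] {lam u a v : ι → ℝ}

/-- The squared Mahalanobis norm `‖Σ^{-1/2} u‖²` for `Σ = diag lam`. -/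
noncomputable def mahalanobisSq (lam u : ι → ℝ) : ℝ := ∑ j, u j ^ 2 / lam j

/-- The dual form `‖Σ^{1/2} v‖²` for `Σ = diag lam`: the variance of `⟨z, v⟩` when `z` is centred
with covariance `Σ`. -/
def varianceForm (lam v : ι → ℝ) : ℝ := ∑ j, lam j * v j ^ 2

lemma mahalanobisSq_nonneg (hlam : ∀ j, 0 ≤ lam j) : 0 ≤ mahalanobisSq lam u :=
  Finset.sum_nonneg fun j _ => div_nonneg (sq_nonneg _) (hlam j)

lemma varianceForm_nonneg (hlam : ∀ j, 0 ≤ lam j) : 0 ≤ varianceForm lam v :=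
  Finset.sum_nonneg fun j _ => mul_nonneg (hlam j) (sq_nonneg _)

lemma mahalanobisSq_eq_zero (hlam : ∀ j, 0 < lam j) (h : mahalanobisSq lam u = 0) : u = 0 := by
  funext j
  have hj := (Finset.sum_eq_zero_iff_of_nonneg
    fun j _ => div_nonneg (sq_nonneg (u j)) (hlam j).le).1 h j (Finset.mem_univ j)
  simpa [(hlam j).ne'] using hj

lemma varianceForm_eq_zero (hlam : ∀ j, 0 < lam j) (h : varianceForm lam v = 0) : v = 0 := by
  funext j
  have hj := (Finset.sum_eq_zero_iff_of_nonneg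
    fun j _ => mul_nonneg (hlam j).le (sq_nonneg (v j))).1 h j (Finset.mem_univ j)
  simpa [(hlam j).ne'] using hj

lemma sq_dotProduct_le_mahalanobisSq_mul_varianceForm (hlam : ∀ j, 0 < lam j) (u v : ι → ℝ) :
    (u ⬝ᵥ v) ^ 2 ≤ mahalanobisSq lam u * varianceForm lam v := by
  refine Finset.sum_sq_le_sum_mul_sum_of_sq_le_mul _
    (fun j _ => div_nonneg (sq_nonneg _) (hlam j).le)
    (fun j _ => mul_nonneg (hlam j).le (sq_nonneg _)) fun j _ => le_of_eq ?_
  have := (hlam j).ne'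
  field_simp

lemma varianceForm_div (hlam : ∀ j, 0 < lam j) :
    varianceForm lam (u / lam) = mahalanobisSq lam u := by
  refine Finset.sum_congr rfl fun j _ => ?_
  have := (hlam j).ne'
  simp only [Pi.div_apply]
  field_simp

lemma dotProduct_div_self : u ⬝ᵥ (u / lam) = mahalanobisSq lam u :=
  Finset.sum_congr rfl fun j _ => by simp only [Pi.div_apply]; ring

lemma mahalanobisSq_sub_of_dotProduct_eq (h : u ⬝ᵥ (a / lam) = mahalanobisSq lam a) :
    mahalanobisSq lam (u - a) = mahalanobisSq lam u - mahalanobisSq lam a := by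
  have expand : mahalanobisSq lam (u - a)
      = mahalanobisSq lam u - 2 * (u ⬝ᵥ (a / lam)) + mahalanobisSq lam a := by
    simp only [mahalanobisSq, dotProduct, Finset.mul_sum, ← Finset.sum_sub_distrib,
      ← Finset.sum_add_distrib, Pi.sub_apply, Pi.div_apply]
    exact Finset.sum_congr rfl fun j _ => by ring
  rw [expand, h]
  ring

lemma le_of_sq_le_mul_self {x y : ℝ} (hy : 0 ≤ y) (h : x ^ 2 ≤ y * x) : x ≤ y := by
  by_contra! hyx
  nlinarith

/-- The sample covariance `Wᵀ W / d` of the `d` rows of `W` is within relative error `ρ` of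
`diag lam` as a quadratic form. -/
def SampleCovClose (lam : ι → ℝ) (W : Matrix κ ι ℝ) (ρ : ℝ) : Prop :=
  ∀ v : ι → ℝ, |(W *ᵥ v) ⬝ᵥ (W *ᵥ v) - Fintype.card κ * varianceForm lam v|
    ≤ ρ * (Fintype.card κ * varianceForm lam v)

namespace SampleCovClose

variable {W : Matrix κ ι ℝ} {ρ : ℝ}

lemma le_dotProduct_mulVec (hW : SampleCovClose lam W ρ) (v : ι → ℝ) :
    (1 - ρ) * (Fintype.card κ * varianceForm lam v) ≤ (W *ᵥ v) ⬝ᵥ (W *ᵥ v) := by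
  linarith [neg_le_of_abs_le (hW v)]

lemma dotProduct_mulVec_le (hW : SampleCovClose lam W ρ) (v : ι → ℝ) :
    (W *ᵥ v) ⬝ᵥ (W *ᵥ v) ≤ (1 + ρ) * (Fintype.card κ * varianceForm lam v) := by
  linarith [le_of_abs_le (hW v)]

lemma mulVec_transpose_mul_self_surjective [Nonempty κ] (hlam : ∀ j, 0 < lam j)
    (hρ : ρ < 1) (hW : SampleCovClose lam W ρ) : Function.Surjective (Wᵀ * W).mulVec := by
  classical
  have hinj : Function.Injective (Wᵀ * W).mulVecLin := by
    rw [← LinearMap.ker_eq_bot, Matrix.ker_mulVecLin_transpose_mul_self, LinearMap.ker_eq_bot']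
    intro v hv
    refine varianceForm_eq_zero hlam (le_antisymm ?_ (varianceForm_nonneg fun j => (hlam j).le))
    have hle := hW.le_dotProduct_mulVec v
    rw [show W *ᵥ v = 0 from hv, dotProduct_zero, ← mul_assoc] at hle
    have hcard : (0 : ℝ) < Fintype.card κ := by exact_mod_cast Fintype.card_pos
    exact nonpos_of_mul_nonpos_right hle (mul_pos (sub_pos.2 hρ) hcard)
  exact LinearMap.surjective_of_injective hinj

lemma exists_vecMul_eq [Nonempty κ] (hlam : ∀ j, 0 < lam j) (hρ : ρ < 1)
    (hW : SampleCovClose lam W ρ) (α : ι → ℝ) :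
    ∃ β : κ → ℝ, β ᵥ* W = α ∧
      (1 - ρ) * (Fintype.card κ * (β ⬝ᵥ β)) ≤ mahalanobisSq lam α := by
  obtain ⟨v, hv⟩ := hW.mulVec_transpose_mul_self_surjective hlam hρ α
  have hα : (W *ᵥ v) ᵥ* W = α := by
    rw [← hv, ← Matrix.mulVec_transpose, Matrix.mulVec_mulVec]
  refine ⟨W *ᵥ v, hα, ?_⟩
  set t := (W *ᵥ v) ⬝ᵥ (W *ᵥ v)
  have ht : t = α ⬝ᵥ v := by rw [← hα, ← Matrix.dotProduct_mulVec]
  have hq : 0 ≤ mahalanobisSq lam α := mahalanobisSq_nonneg fun j => (hlam j).le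
  have : (0 : ℝ) ≤ (1 - ρ) * Fintype.card κ := mul_nonneg (sub_pos.2 hρ).le (Nat.cast_nonneg _)
  refine le_of_sq_le_mul_self hq ?_
  calc ((1 - ρ) * (Fintype.card κ * t)) ^ 2
      = ((1 - ρ) * Fintype.card κ) ^ 2 * (α ⬝ᵥ v) ^ 2 := by rw [ht]; ring
    _ ≤ ((1 - ρ) * Fintype.card κ) ^ 2 * (mahalanobisSq lam α * varianceForm lam v) := by
        gcongr
        exact sq_dotProduct_le_mahalanobisSq_mul_varianceForm hlam α v
    _ = mahalanobisSq lam α * (((1 - ρ) * Fintype.card κ) *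
          ((1 - ρ) * (Fintype.card κ * varianceForm lam v))) := by ring
    _ ≤ mahalanobisSq lam α * (((1 - ρ) * Fintype.card κ) * t) := by
        gcongr
        exact hW.le_dotProduct_mulVec v
    _ = mahalanobisSq lam α * ((1 - ρ) * (Fintype.card κ * t)) := by ring

lemma mahalanobisSq_vecMul_le (hlam : ∀ j, 0 < lam j) (hρ : 0 ≤ ρ)
    (hW : SampleCovClose lam W ρ) (β : κ → ℝ) :
    mahalanobisSq lam (β ᵥ* W) ≤ (1 + ρ) * (Fintype.card κ * (β ⬝ᵥ β)) := by
  set u := β ᵥ* W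
  have hβ : 0 ≤ β ⬝ᵥ β := Finset.sum_nonneg fun i _ => mul_self_nonneg (β i)
  refine le_of_sq_le_mul_self (by positivity) ?_
  calc mahalanobisSq lam u ^ 2 = (β ⬝ᵥ W *ᵥ (u / lam)) ^ 2 := by
        rw [Matrix.dotProduct_mulVec, dotProduct_div_self]
    _ ≤ (β ⬝ᵥ β) * ((W *ᵥ (u / lam)) ⬝ᵥ (W *ᵥ (u / lam))) := by
        simpa only [dotProduct, sq] using
          Finset.sum_mul_sq_le_sq_mul_sq Finset.univ β (W *ᵥ (u / lam))
    _ ≤ (β ⬝ᵥ β) * ((1 + ρ) * (Fintype.card κ * varianceForm lam (u / lam))) := by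
        gcongr
        exact hW.dotProduct_mulVec_le _
    _ = (1 + ρ) * (Fintype.card κ * (β ⬝ᵥ β)) * mahalanobisSq lam u := by
        rw [varianceForm_div hlam]
        ring

/-- `β ᵥ* W` is nearly `Σ`-minimal in `S`, and Pythagoras turns this into closeness to `α`. -/
lemma mahalanobisSq_vecMul_sub_le [Nonempty κ] (hlam : ∀ j, 0 < lam j) (hρ₀ : 0 ≤ ρ)
    (hρ : ρ ≤ 1 / 2) (hW : SampleCovClose lam W ρ) {S : Set (ι → ℝ)} {α : ι → ℝ} (hα : α ∈ S)
    (hpyth : ∀ u ∈ S, mahalanobisSq lam (u - α) = mahalanobisSq lam u - mahalanobisSq lam α)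
    {β : κ → ℝ} (hβ : (∃ β' : κ → ℝ, β' ᵥ* W ∈ S) →
      β ᵥ* W ∈ S ∧ ∀ β' : κ → ℝ, β' ᵥ* W ∈ S → β ⬝ᵥ β ≤ β' ⬝ᵥ β') :
    mahalanobisSq lam (β ᵥ* W - α) ≤ 4 * ρ * mahalanobisSq lam α := by
  obtain ⟨β₀, hβ₀, hβ₀_le⟩ := hW.exists_vecMul_eq hlam (by linarith) α
  have hβ₀_mem : β₀ ᵥ* W ∈ S := hβ₀ ▸ hα
  obtain ⟨hmem, hmin⟩ := hβ ⟨β₀, hβ₀_mem⟩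
  have hβ_le : Fintype.card κ * (β ⬝ᵥ β) ≤ Fintype.card κ * (β₀ ⬝ᵥ β₀) := by
    gcongr
    exact hmin β₀ hβ₀_mem
  have hpush := hW.mahalanobisSq_vecMul_le hlam hρ₀ β
  have hcost : 0 ≤ Fintype.card κ * (β₀ ⬝ᵥ β₀) :=
    mul_nonneg (Nat.cast_nonneg _) (Finset.sum_nonneg fun i _ => mul_self_nonneg (β₀ i))
  set q := mahalanobisSq lam α
  have hnorm : mahalanobisSq lam (β ᵥ* W) ≤ (1 + ρ) * (Fintype.card κ * (β₀ ⬝ᵥ β₀)) :=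
    hpush.trans (mul_le_mul_of_nonneg_left hβ_le (by linarith))
  have hcost_le : Fintype.card κ * (β₀ ⬝ᵥ β₀) ≤ 2 * q := by
    linarith [mul_le_mul_of_nonneg_right hρ hcost]
  rw [hpyth _ hmem]
  linarith [mul_le_mul_of_nonneg_left hcost_le hρ₀]

end SampleCovClose

end WeightedForms

section CosineSums

/-- The cosine sum `cos θ + ⋯ + cos (m θ)`, so that `1 / 2 + cosSum m` is half the Dirichlet
kernel. -/
noncomputable def cosSum (m : ℕ) (θ : ℝ) : ℝ := ∑ k ∈ Finset.Icc 1 m, Real.cos (k * θ)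

lemma cosSum_zero_right (m : ℕ) : cosSum m 0 = m := by simp [cosSum]

lemma two_mul_sin_mul_cosSum (m : ℕ) (ψ : ℝ) :
    2 * Real.sin ψ * cosSum m (2 * ψ) = Real.sin ((2 * m + 1) * ψ) - Real.sin ψ := by
  induction m with
  | zero => simp [cosSum]
  | succ m ih =>
    have hstep : cosSum (m + 1) (2 * ψ) = cosSum m (2 * ψ) + Real.cos ((m + 1 : ℕ) * (2 * ψ)) :=
      Finset.sum_Icc_succ_top (by lia) _
    have hlow : (2 * (m : ℝ) + 1) * ψ = (m + 1 : ℕ) * (2 * ψ) - ψ := by push_cast; ring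
    have hhigh : (2 * ((m + 1 : ℕ) : ℝ) + 1) * ψ = (m + 1 : ℕ) * (2 * ψ) + ψ := by
      push_cast; ring
    rw [hstep, mul_add, ih, hlow, hhigh, Real.sin_sub, Real.sin_add]
    ring

lemma sum_primitiveRoot_pow {R : Type*} [CommRing R] [IsDomain R] {ζ : R} {n : ℕ}
    (hζ : IsPrimitiveRoot ζ n) (k : ℕ) :
    ∑ i ∈ Finset.range n, (ζ ^ k) ^ (i + 1) = if n ∣ k then (n : R) else 0 := by
  split_ifs with hk
  · simp [(hζ.pow_eq_one_iff_dvd k).2 hk]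
  · have hne : ζ ^ k - 1 ≠ 0 := sub_ne_zero.2 fun h => hk ((hζ.pow_eq_one_iff_dvd k).1 h)
    have hgeom : (ζ ^ k - 1) * ∑ i ∈ Finset.range n, (ζ ^ k) ^ i = 0 := by
      rw [mul_geom_sum, ← pow_mul, mul_comm k n, pow_mul, hζ.pow_eq_one, one_pow, sub_self]
    simp only [pow_succ, ← Finset.sum_mul, (mul_eq_zero.1 hgeom).resolve_left hne, zero_mul]

lemma sum_cos_sub_grid {n : ℕ} (hn : n ≠ 0) (k : ℕ) (θ : ℝ) :
    ∑ i ∈ Finset.range n, Real.cos (θ - k * (2 * Real.pi * (i + 1) / n))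
      = if n ∣ k then n * Real.cos θ else 0 := by
  have hterm : ∀ i : ℕ, Real.cos (θ - k * (2 * Real.pi * (i + 1) / n)) =
      ((Complex.exp (2 * Real.pi * Complex.I / n) ^ k) ^ (i + 1) *
        Complex.exp (-θ * Complex.I)).re := by
    intro i
    rw [← Complex.exp_nat_mul, ← Complex.exp_nat_mul, ← Complex.exp_add,
      ← Real.cos_neg, ← Complex.exp_ofReal_mul_I_re]
    congr 2
    push_cast
    ring
  simp_rw [hterm]
  rw [← Complex.re_sum, ← Finset.sum_mul,
    sum_primitiveRoot_pow (Complex.isPrimitiveRoot_exp n hn) k]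
  split_ifs
  · rw [← Complex.ofReal_natCast, Complex.re_ofReal_mul, ← Complex.ofReal_neg,
      Complex.exp_ofReal_mul_I_re, Real.cos_neg]
  · simp

lemma sum_Icc_ite_dvd {M : Type*} [AddCommMonoid M] {n : ℕ} (hn : n ≠ 0) (m : ℕ) (f : ℕ → M) :
    ∑ k ∈ Finset.Icc 1 (n * m), (if n ∣ k then f k else 0) = ∑ l ∈ Finset.Icc 1 m, f (n * l) := by
  rw [← Finset.sum_filter]
  symm
  refine Finset.sum_bij (fun l _ => n * l) (fun l hl => ?_)
    (fun _ _ _ _ h => Nat.eq_of_mul_eq_mul_left (Nat.pos_of_ne_zero hn) h) (fun k hk => ?_)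
    fun _ _ => rfl
  · rw [Finset.mem_Icc] at hl
    simp only [Finset.mem_filter, Finset.mem_Icc, dvd_mul_right, and_true]
    exact ⟨Nat.mul_pos (Nat.pos_of_ne_zero hn) hl.1, Nat.mul_le_mul_left n hl.2⟩
  · obtain ⟨hk, l, rfl⟩ := Finset.mem_filter.1 hk
    rw [Finset.mem_Icc] at hk
    exact ⟨l, Finset.mem_Icc.2 ⟨Nat.pos_of_mul_pos_left hk.1,
      Nat.le_of_mul_le_mul_left hk.2 (Nat.pos_of_ne_zero hn)⟩, rfl⟩

/-- Averaging over the grid aliases the cosine sum: only frequencies divisible by `n` survive. -/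
lemma sum_cosSum_sub_grid {n : ℕ} (hn : n ≠ 0) (m : ℕ) (θ : ℝ) :
    ∑ i ∈ Finset.range n, cosSum (n * m) (θ - 2 * Real.pi * (i + 1) / n)
      = n * cosSum m (n * θ) := by
  simp only [cosSum, mul_sub]
  rw [Finset.sum_comm]
  simp_rw [sum_cos_sub_grid hn]
  rw [sum_Icc_ite_dvd hn m fun k => n * Real.cos (k * θ), Finset.mul_sum]
  refine Finset.sum_congr rfl fun l _ => ?_
  push_cast
  ring_nf

end CosineSums

section FourierKernel

/-- Weights `c` on every nonconstant feature and `2 a c` on the constant one; the spike is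
normalised so that `a` is its value relative to a single frequency of the kernel. -/
def spikedWeights (B : ℕ) (a c : ℝ) : Fin B → ℝ := fun j => c * if j.val = 0 then 2 * a else 1

lemma spikedWeights_pos {B : ℕ} {a c : ℝ} (ha : 0 < a) (hc : 0 < c) (j : Fin B) :
    0 < spikedWeights B a c j := by
  unfold spikedWeights
  split_ifs <;> positivity

lemma phiF_odd {B k : ℕ} (hk : 2 * k + 1 < B) (x : ℝ) :
    phiF B x ⟨2 * k + 1, hk⟩ = Real.sin ((k + 1 : ℕ) * (Real.pi * x)) := by
  have hfreq : (2 * k + 1 + 1) / 2 = k + 1 := by lia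
  simp only [phiF, hfreq, Nat.mul_add_mod, Nat.add_eq_zero_iff, one_ne_zero, and_false, if_false,
    Nat.one_mod, if_true, mul_assoc]

lemma phiF_even {B k : ℕ} (hk : 2 * k + 2 < B) (x : ℝ) :
    phiF B x ⟨2 * k + 2, hk⟩ = Real.cos ((k + 1 : ℕ) * (Real.pi * x)) := by
  have hfreq : (2 * k + 2) / 2 = k + 1 := by lia
  simp only [phiF, hfreq, Nat.mul_add_mod, Nat.add_eq_zero_iff, two_ne_zero, and_false, if_false,
    Nat.mod_self, zero_ne_one, mul_assoc]

lemma sum_spikedWeights_mul_phiF (M : ℕ) (a c x y : ℝ) :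
    ∑ j, spikedWeights (2 * M + 1) a c j * (phiF (2 * M + 1) x j * phiF (2 * M + 1) y j)
      = c * (a + cosSum M (Real.pi * (x - y))) := by
  induction M with
  | zero =>
    have hconst : (√2 : ℝ)⁻¹ * (√2)⁻¹ = 1 / 2 := by
      rw [← mul_inv, Real.mul_self_sqrt (by norm_num), one_div]
    have hsingle : ∑ j, spikedWeights 1 a c j * (phiF 1 x j * phiF 1 y j)
        = c * (2 * a) * ((√2)⁻¹ * (√2)⁻¹) := by simp [spikedWeights, phiF]
    have hempty : cosSum 0 (Real.pi * (x - y)) = 0 := Finset.sum_empty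
    rw [hempty]
    refine hsingle.trans ?_
    rw [hconst]
    ring
  | succ M ih =>
    have hstep : cosSum (M + 1) (Real.pi * (x - y)) = cosSum M (Real.pi * (x - y))
        + Real.cos ((M + 1 : ℕ) * (Real.pi * (x - y))) :=
      Finset.sum_Icc_succ_top (by lia) _
    have hsplit : (M + 1 : ℕ) * (Real.pi * (x - y))
        = (M + 1 : ℕ) * (Real.pi * x) - (M + 1 : ℕ) * (Real.pi * y) := by ring
    have hlast : (Fin.last (2 * M + 1 + 1)) = ⟨2 * M + 2, by lia⟩ := rfl
    have hpred : (Fin.last (2 * M + 1)).castSucc = ⟨2 * M + 1, by lia⟩ := rfl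
    rw [show 2 * (M + 1) + 1 = 2 * M + 1 + 1 + 1 by ring, Fin.sum_univ_castSucc,
      Fin.sum_univ_castSucc, hlast, hpred, phiF_odd, phiF_odd, phiF_even, phiF_even, hstep, hsplit,
      Real.cos_sub]
    refine Eq.trans (congrArg₂ _ (congrArg₂ _ ih rfl) rfl) ?_
    simp only [spikedWeights, Nat.add_eq_zero_iff, one_ne_zero, two_ne_zero, and_false, if_false,
      mul_one]
    ring

end FourierKernel

section FourierInterpolator

/-- The `2π`-periodic kernel `a + cos θ + ⋯ + cos (m θ)`, normalised to equal `1` at `0`. -/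
noncomputable def normalizedKernel (a : ℝ) (m : ℕ) (θ : ℝ) : ℝ := (a + cosSum m θ) / (a + m)

/-- Coefficients of the interpolator of constant labels for `spikedWeights`: a multiple of `Σ Φᵀ 1`,
hence orthogonal in the `Σ⁻¹` inner product to every coefficient vector vanishing on the grid. -/
noncomputable def fourierSolution (n m : ℕ) (a c : ℝ) : Fin (2 * (n * m) + 1) → ℝ := fun j =>
  spikedWeights _ a c j * (∑ i, phiF _ (xtr n i) j) / (n * (c * (a + m)))

variable {n m : ℕ} {a c : ℝ}

lemma sum_cosSum_sub_xtr (hn : n ≠ 0) (x : ℝ) :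
    ∑ i, cosSum (n * m) (Real.pi * (x - xtr n i)) = n * cosSum m (n * (Real.pi * (x + 1))) := by
  rw [← sum_cosSum_sub_grid hn, ← Fin.sum_univ_eq_sum_range fun i =>
    cosSum (n * m) (Real.pi * (x + 1) - 2 * Real.pi * (i + 1) / n)]
  refine Finset.sum_congr rfl fun i _ => congrArg _ ?_
  simp only [xtr]
  ring

lemma fourierSolution_dotProduct_phiF (hn : n ≠ 0) (hc : c ≠ 0) (x : ℝ) :
    fourierSolution n m a c ⬝ᵥ phiF _ x = normalizedKernel a m (n * (Real.pi * (x + 1))) := by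
  have hn' : (n : ℝ) ≠ 0 := Nat.cast_ne_zero.2 hn
  calc fourierSolution n m a c ⬝ᵥ phiF _ x
      = (∑ i, ∑ j, spikedWeights _ a c j * (phiF _ x j * phiF _ (xtr n i) j))
          / (n * (c * (a + m))) := by
        rw [Finset.sum_comm, Finset.sum_div]
        refine Finset.sum_congr rfl fun j _ => ?_
        rw [fourierSolution, ← Finset.mul_sum, ← Finset.mul_sum]
        ring
    _ = (n * (c * (a + cosSum m (n * (Real.pi * (x + 1)))))) / (n * (c * (a + m))) := by
        simp only [sum_spikedWeights_mul_phiF, ← Finset.mul_sum, Finset.sum_add_distrib,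
          sum_cosSum_sub_xtr hn, Finset.sum_const, Finset.card_univ, Fintype.card_fin,
          nsmul_eq_mul]
        ring
    _ = normalizedKernel a m (n * (Real.pi * (x + 1))) := by
        rw [mul_div_mul_left _ _ hn', mul_div_mul_left _ _ hc, normalizedKernel]

lemma normalizedKernel_nat_mul_two_pi (ham : a + m ≠ 0) (k : ℕ) :
    normalizedKernel a m (k * (2 * Real.pi)) = 1 := by
  have hcos : cosSum m (k * (2 * Real.pi)) = m := by
    rw [← cosSum_zero_right m]
    refine Finset.sum_congr rfl fun l _ => ?_
    rw [mul_zero, Real.cos_zero, ← mul_assoc, ← Nat.cast_mul, Real.cos_nat_mul_two_pi]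
  rw [normalizedKernel, hcos, div_self ham]

lemma interpolates_fourierSolution (hn : n ≠ 0) (hc : c ≠ 0) (ham : a + m ≠ 0) :
    Interpolates n _ (fourierSolution n m a c) := by
  intro i
  have hn' : (n : ℝ) ≠ 0 := Nat.cast_ne_zero.2 hn
  refine (fourierSolution_dotProduct_phiF hn hc _).trans
    (Eq.trans (congrArg _ ?_) (normalizedKernel_nat_mul_two_pi ham (i + 1)))
  simp only [xtr]
  push_cast
  field_simp
  ring

lemma Interpolates.dotProduct_fourierSolution_div (hn : n ≠ 0) (ha : 0 < a) (hc : 0 < c)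
    {u : Fin (2 * (n * m) + 1) → ℝ} (hu : Interpolates n _ u) :
    u ⬝ᵥ (fourierSolution n m a c / spikedWeights _ a c) = 1 / (c * (a + m)) := by
  have hn' : (n : ℝ) ≠ 0 := Nat.cast_ne_zero.2 hn
  calc u ⬝ᵥ (fourierSolution n m a c / spikedWeights _ a c)
      = (∑ i, ∑ j, u j * phiF _ (xtr n i) j) / (n * (c * (a + m))) := by
        rw [Finset.sum_comm, Finset.sum_div]
        refine Finset.sum_congr rfl fun j _ => ?_
        have := (spikedWeights_pos ha hc j).ne'
        rw [Pi.div_apply, fourierSolution, ← Finset.mul_sum]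
        field_simp
    _ = n / (n * (c * (a + m))) := by
        rw [Finset.sum_congr rfl fun i _ => hu i]
        simp
    _ = 1 / (c * (a + m)) := by field_simp

lemma mahalanobisSq_fourierSolution (hn : n ≠ 0) (ha : 0 < a) (hc : 0 < c) :
    mahalanobisSq (spikedWeights _ a c) (fourierSolution n m a c) = 1 / (c * (a + m)) := by
  rw [← dotProduct_div_self]
  exact (interpolates_fourierSolution hn hc.ne' (by positivity)).dotProduct_fourierSolution_div
    hn ha hc

lemma Interpolates.mahalanobisSq_sub_fourierSolution (hn : n ≠ 0) (ha : 0 < a) (hc : 0 < c)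
    {u : Fin (2 * (n * m) + 1) → ℝ} (hu : Interpolates n _ u) :
    mahalanobisSq (spikedWeights _ a c) (u - fourierSolution n m a c)
      = mahalanobisSq (spikedWeights _ a c) u
        - mahalanobisSq (spikedWeights _ a c) (fourierSolution n m a c) :=
  mahalanobisSq_sub_of_dotProduct_eq <| by
    rw [hu.dotProduct_fourierSolution_div hn ha hc, mahalanobisSq_fourierSolution hn ha hc]

lemma IsMinInterp.eq_fourierSolution (hn : n ≠ 0) (ha : 0 < a) (hc : 0 < c)
    {α : Fin (2 * (n * m) + 1) → ℝ} (hα : IsMinInterp n _ (spikedWeights _ a c) α) :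
    α = fourierSolution n m a c := by
  have hpos := fun j => spikedWeights_pos (B := 2 * (n * m) + 1) ha hc j
  have hle : mahalanobisSq (spikedWeights _ a c) α
      ≤ mahalanobisSq (spikedWeights _ a c) (fourierSolution n m a c) :=
    hα.2 _ (interpolates_fourierSolution hn hc.ne' (by positivity))
  refine sub_eq_zero.1 (mahalanobisSq_eq_zero hpos (le_antisymm ?_
    (mahalanobisSq_nonneg fun j => (hpos j).le)))
  rw [hα.1.mahalanobisSq_sub_fourierSolution hn ha hc]
  linarith

lemma varianceForm_phiF (M : ℕ) (x : ℝ) :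
    varianceForm (spikedWeights _ a c) (phiF (2 * M + 1) x) = c * (a + M) := by
  simpa only [varianceForm, sq, sub_self, mul_zero, cosSum_zero_right]
    using sum_spikedWeights_mul_phiF M a c x x

end FourierInterpolator

section RFSInterpolator

variable {n m d : ℕ} {a c ρ : ℝ}

lemma rfsFun_eq_vecMul_dotProduct {B : ℕ} (W : Fin d → Fin B → ℝ) (β : Fin d → ℝ) (x : ℝ) :
    rfsFun B d W β x = (β ᵥ* Matrix.of W) ⬝ᵥ phiF B x :=
  Matrix.dotProduct_mulVec β (Matrix.of W) (phiF B x)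

lemma rfsInterpolates_iff {B : ℕ} {W : Fin d → Fin B → ℝ} {β : Fin d → ℝ} :
    RFSInterpolates n B d W β ↔ Interpolates n B (β ᵥ* Matrix.of W) := by
  simp only [RFSInterpolates, rfsFun_eq_vecMul_dotProduct, Interpolates, dotProduct]

/-- `β` is a minimum-`ℓ₂`-norm interpolator of the constant labels on the RFS features. -/
def IsMinRFSInterp (n B d : ℕ) (W : Fin d → Fin B → ℝ) (β : Fin d → ℝ) : Prop :=
  RFSInterpolates n B d W β ∧
    ∀ β' : Fin d → ℝ, RFSInterpolates n B d W β' → ∑ i, β i ^ 2 ≤ ∑ i, β' i ^ 2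

lemma abs_rfsFun_sub_fourierSolution_le [NeZero d] (hn : n ≠ 0) (ha : 0 < a) (hc : 0 < c)
    (hρ₀ : 0 ≤ ρ) (hρ : ρ ≤ 1 / 2) {W : Fin d → Fin (2 * (n * m) + 1) → ℝ}
    (hW : SampleCovClose (spikedWeights _ a c) (Matrix.of W) ρ) {β : Fin d → ℝ}
    (hβ : (∃ β', RFSInterpolates n _ d W β') → IsMinRFSInterp n _ d W β) (x : ℝ) :
    |rfsFun _ d W β x - fourierSolution n m a c ⬝ᵥ phiF _ x| ≤ √(4 * ρ * n) := by
  have hpos := fun j => spikedWeights_pos (B := 2 * (n * m) + 1) ha hc j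
  have hcoef : mahalanobisSq (spikedWeights _ a c) (β ᵥ* Matrix.of W - fourierSolution n m a c)
      ≤ 4 * ρ * (1 / (c * (a + m))) := by
    rw [← mahalanobisSq_fourierSolution hn ha hc]
    refine hW.mahalanobisSq_vecMul_sub_le hpos hρ₀ hρ (S := {u | Interpolates n _ u})
      (interpolates_fourierSolution hn hc.ne' (by positivity))
      (fun u hu => hu.mahalanobisSq_sub_fourierSolution hn ha hc) ?_
    simpa only [IsMinRFSInterp, rfsInterpolates_iff, dotProduct, ← sq, Set.mem_ofPred_eq] using hβ
  have hfeature : varianceForm (spikedWeights _ a c) (phiF (2 * (n * m) + 1) x)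
      ≤ n * (c * (a + m)) := by
    have hn1 : (1 : ℝ) ≤ n := by exact_mod_cast Nat.one_le_iff_ne_zero.2 hn
    rw [varianceForm_phiF]
    push_cast
    nlinarith [mul_pos hc ha]
  rw [rfsFun_eq_vecMul_dotProduct, ← sub_dotProduct]
  refine Real.abs_le_sqrt ?_
  calc _ ≤ _ := sq_dotProduct_le_mahalanobisSq_mul_varianceForm hpos _ _
    _ ≤ (4 * ρ * (1 / (c * (a + m)))) * (n * (c * (a + m))) :=
        mul_le_mul hcoef hfeature (varianceForm_nonneg fun j => (hpos j).le) (by positivity)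
    _ = 4 * ρ * n := by field_simp

end RFSInterpolator

section Anticoncentration

lemma sin_le_abs_cos_add_nat_mul_pi_div_two {y h : ℝ} (hh : h ≤ y) (hh₀ : 0 ≤ h)
    (hy : y ≤ Real.pi / 2 - h) (k : ℕ) :
    Real.sin h ≤ |Real.cos (y + k * (Real.pi / 2))| := by
  suffices Real.sin h ≤ |Real.cos (y + k * (Real.pi / 2))| ∧
      Real.sin h ≤ |Real.sin (y + k * (Real.pi / 2))| from this.1
  induction k with
  | zero =>
    have hsin : Real.sin h ≤ Real.sin y :=
      Real.sin_le_sin_of_le_of_le_pi_div_two (by linarith) (by linarith) hh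
    have hcos : Real.sin h ≤ Real.cos y := by
      rw [← Real.sin_pi_div_two_sub]
      exact Real.sin_le_sin_of_le_of_le_pi_div_two (by linarith) (by linarith) (by linarith)
    simp only [Nat.cast_zero, zero_mul, add_zero]
    exact ⟨hcos.trans (le_abs_self _), hsin.trans (le_abs_self _)⟩
  | succ k ih =>
    have hshift : y + ((k + 1 : ℕ) : ℝ) * (Real.pi / 2) = y + k * (Real.pi / 2) + Real.pi / 2 := by
      push_cast; ring
    rw [hshift, Real.cos_add_pi_div_two, Real.sin_add_pi_div_two, abs_neg]
    exact ih.symm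

/-- The quarter period `[k π / 2, (k + 1) π / 2]`, on which `sin` is monotone. -/
def quarterPeriod (k : ℕ) : Set ℝ := Set.Icc (k * (Real.pi / 2)) ((k + 1 : ℕ) * (Real.pi / 2))

lemma abs_sub_le_of_mem_quarterPeriod {k : ℕ} {v w : ℝ} (hv : v ∈ quarterPeriod k)
    (hw : w ∈ quarterPeriod k) : |v - w| ≤ Real.pi / 2 := by
  obtain ⟨hv₀, hv₁⟩ := hv
  obtain ⟨hw₀, hw₁⟩ := hw
  push_cast at hv₁ hw₁
  rw [abs_le]
  constructor <;> linarith

lemma sq_sub_le_abs_sin_sub_sin {k : ℕ} {v w : ℝ} (hv : v ∈ quarterPeriod k)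
    (hw : w ∈ quarterPeriod k) : 2 * ((v - w) / Real.pi) ^ 2 ≤ |Real.sin v - Real.sin w| := by
  wlog hwv : w ≤ v generalizing v w
  · have hswap := this hw hv (le_of_not_ge hwv)
    rwa [abs_sub_comm, ← neg_sub v w, neg_div, neg_sq] at hswap
  have hlen := (le_abs_self _).trans (abs_sub_le_of_mem_quarterPeriod hv hw)
  obtain ⟨-, hv₁⟩ := hv
  obtain ⟨hw₀, -⟩ := hw
  push_cast at hv₁
  set h := (v - w) / 2 with hh
  have hh₀ : 0 ≤ h := by linarith
  have hjordan : 2 / Real.pi * h ≤ Real.sin h := Real.mul_le_sin hh₀ (by linarith)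
  have hcos := sin_le_abs_cos_add_nat_mul_pi_div_two (y := (v + w) / 2 - k * (Real.pi / 2))
    (by linarith) hh₀ (by linarith) k
  rw [sub_add_cancel] at hcos
  have hpos : 0 ≤ 2 / Real.pi * h := mul_nonneg (by positivity) hh₀
  calc 2 * ((v - w) / Real.pi) ^ 2 = 2 * (2 / Real.pi * h) * (2 / Real.pi * h) := by
        rw [hh]; ring
    _ ≤ 2 * Real.sin h * |Real.cos ((v + w) / 2)| :=
        mul_le_mul (by linarith) (hjordan.trans hcos) hpos (by linarith)
    _ = |Real.sin v - Real.sin w| := by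
        rw [Real.sin_sub_sin, abs_mul, abs_mul, abs_two, abs_of_nonneg (hpos.trans hjordan)]

variable {g : ℝ → ℝ} {L : NNReal}

lemma volume_abs_sin_sub_le_quarterPeriod (hg : LipschitzWith L g) (η : ℝ) (k : ℕ) :
    volume {θ ∈ quarterPeriod k | |Real.sin θ - g θ| ≤ η}
      ≤ ENNReal.ofReal (Real.pi * √(η + L)) := by
  refine (Real.volume_le_diam _).trans (Metric.ediam_le ?_)
  rintro v ⟨hv, hvη⟩ w ⟨hw, hwη⟩
  rw [edist_dist]
  refine ENNReal.ofReal_le_ofReal ?_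
  have hgvw : |g v - g w| ≤ L * (Real.pi / 2) :=
    (hg.dist_le_mul v w).trans
      (mul_le_mul_of_nonneg_left (abs_sub_le_of_mem_quarterPeriod hv hw) L.2)
  have hsin : |Real.sin v - Real.sin w| ≤ 2 * η + L * (Real.pi / 2) := by
    rw [abs_le] at *
    constructor <;> linarith
  have hpi : (L : ℝ) * Real.pi ≤ L * 4 := mul_le_mul_of_nonneg_left Real.pi_le_four L.2
  have hsq : ((v - w) / Real.pi) ^ 2 ≤ η + L := by
    linarith [sq_sub_le_abs_sin_sub_sin hv hw]
  have hroot := Real.abs_le_sqrt hsq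
  rw [abs_div, abs_of_pos Real.pi_pos, div_le_iff₀ Real.pi_pos] at hroot
  rw [Real.dist_eq]
  linarith

lemma volume_abs_sin_sub_le (hg : LipschitzWith L g) (η : ℝ) (k : ℕ) :
    volume {θ ∈ Set.Icc 0 (k * (Real.pi / 2)) | |Real.sin θ - g θ| ≤ η}
      ≤ ENNReal.ofReal (k * (Real.pi * √(η + L))) := by
  induction k with
  | zero =>
    refine (measure_mono_null (t := {0}) ?_ (by simp)).le.trans zero_le
    rintro θ ⟨⟨h₀, h₁⟩, -⟩
    exact le_antisymm (by simpa using h₁) h₀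
  | succ k ih =>
    have hcover : {θ ∈ Set.Icc 0 (((k + 1 : ℕ) : ℝ) * (Real.pi / 2)) | |Real.sin θ - g θ| ≤ η} ⊆
        {θ ∈ Set.Icc 0 (k * (Real.pi / 2)) | |Real.sin θ - g θ| ≤ η} ∪
          {θ ∈ quarterPeriod k | |Real.sin θ - g θ| ≤ η} := by
      rintro θ ⟨⟨h₀, h₁⟩, hη⟩
      rcases le_total θ (k * (Real.pi / 2)) with h | h
      · exact Or.inl ⟨⟨h₀, h⟩, hη⟩
      · exact Or.inr ⟨⟨h, h₁⟩, hη⟩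
    calc _ ≤ _ := (measure_mono hcover).trans (measure_union_le _ _)
      _ ≤ _ := add_le_add ih (volume_abs_sin_sub_le_quarterPeriod hg η k)
      _ = _ := by
        rw [← ENNReal.ofReal_add (by positivity) (by positivity)]
        push_cast
        ring_nf

lemma volume_Icc_neg_one_one_mul_add_one {r : ℝ} (hr : 0 < r) (P : ℝ → Prop) :
    volume {x ∈ Set.Icc (-1 : ℝ) 1 | P (r * (x + 1))}
      = ENNReal.ofReal r⁻¹ * volume {θ ∈ Set.Icc 0 (2 * r) | P θ} := by
  have hpre : {x ∈ Set.Icc (-1 : ℝ) 1 | P (r * (x + 1))}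
      = (fun x => x + 1) ⁻¹' ((fun x => r * x) ⁻¹' {θ ∈ Set.Icc 0 (2 * r) | P θ}) := by
    ext x
    refine and_congr_left fun _ => ?_
    rw [Set.mem_Icc, Set.mem_Icc]
    constructor <;> rintro ⟨h₀, h₁⟩ <;> constructor <;> nlinarith
  rw [hpre, measure_preimage_add_right, Real.volume_preimage_mul_left hr.ne',
    abs_of_pos (inv_pos.2 hr)]

lemma abs_sin_sub_mul_sin_le {a : ℝ} {m : ℕ} (ham : 0 < a + m) (ψ : ℝ) :
    |Real.sin ((2 * m + 1) * ψ) - (1 - 2 * a) * Real.sin ψ|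
      ≤ 2 * (a + m) * |normalizedKernel a m (2 * ψ)| := by
  have hkernel : Real.sin ((2 * m + 1) * ψ) - (1 - 2 * a) * Real.sin ψ
      = 2 * (a + m) * normalizedKernel a m (2 * ψ) * Real.sin ψ := by
    have hval : (a + m) * normalizedKernel a m (2 * ψ) = a + cosSum m (2 * ψ) :=
      mul_div_cancel₀ _ ham.ne'
    linear_combination -two_mul_sin_mul_cosSum m ψ - 2 * Real.sin ψ * hval
  rw [hkernel, abs_mul, abs_mul, abs_of_pos (mul_pos two_pos ham)]
  exact mul_le_of_le_one_right (by positivity) (Real.abs_sin_le_one ψ)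

lemma lipschitzWith_mul_sin_div (s N : ℝ) :
    LipschitzWith ‖s / N‖₊ fun θ => s * Real.sin (θ / N) := by
  refine LipschitzWith.of_dist_le_mul fun x y => ?_
  rw [Real.dist_eq, Real.dist_eq, coe_nnnorm, Real.norm_eq_abs, ← mul_sub, abs_mul, abs_div]
  calc |s| * |Real.sin (x / N) - Real.sin (y / N)| ≤ |s| * |x / N - y / N| :=
        mul_le_mul_of_nonneg_left (Real.abs_sin_sub_sin_le _ _) (abs_nonneg s)
    _ = |s| / |N| * |x - y| := by
        rw [← sub_div, abs_div]
        ring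

lemma volume_abs_normalizedKernel_le {n m : ℕ} (hn : n ≠ 0) {a : ℝ} (ham : 0 < a + m) (ε : ℝ) :
    volume {x ∈ Set.Icc (-1 : ℝ) 1 | |normalizedKernel a m (n * (Real.pi * (x + 1)))| ≤ ε}
      ≤ ENNReal.ofReal (4 * √(2 * (a + m) * ε + |1 - 2 * a| / (2 * m + 1))) := by
  set N : ℝ := 2 * m + 1
  have hN : 0 < N := by positivity
  have : (0 : ℝ) < n := by positivity
  set r := N * n * Real.pi / 2 with hr
  have hr₀ : 0 < r := by positivity
  set η := 2 * (a + m) * ε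
  have hsub : {x ∈ Set.Icc (-1 : ℝ) 1 | |normalizedKernel a m (n * (Real.pi * (x + 1)))| ≤ ε} ⊆
      {x ∈ Set.Icc (-1 : ℝ) 1 |
        |Real.sin (r * (x + 1)) - (1 - 2 * a) * Real.sin (r * (x + 1) / N)| ≤ η} := by
    rintro x ⟨hx, hε⟩
    refine ⟨hx, ?_⟩
    have hsin := abs_sin_sub_mul_sin_le ham (r * (x + 1) / N)
    rw [mul_div_cancel₀ _ hN.ne', show 2 * (r * (x + 1) / N) = n * (Real.pi * (x + 1)) by
      rw [hr]; field_simp] at hsin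
    exact hsin.trans (mul_le_mul_of_nonneg_left hε (by positivity))
  have hquarters : 2 * r = (2 * (2 * m + 1) * n : ℕ) * (Real.pi / 2) := by
    rw [hr]; push_cast; ring
  have hbound := volume_abs_sin_sub_le (lipschitzWith_mul_sin_div (1 - 2 * a) N) η
    (2 * (2 * m + 1) * n)
  rw [coe_nnnorm, Real.norm_eq_abs, abs_div, abs_of_pos hN, ← hquarters] at hbound
  refine (measure_mono hsub).trans ?_
  rw [volume_Icc_neg_one_one_mul_add_one hr₀ fun θ =>
    |Real.sin θ - (1 - 2 * a) * Real.sin (θ / N)| ≤ η]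
  refine (mul_le_mul_right hbound _).trans (le_of_eq ?_)
  rw [← ENNReal.ofReal_mul (by positivity)]
  congr 1
  rw [hr]
  push_cast
  field_simp
  ring

end Anticoncentration

section RiskStability

lemma toReal_volume_le_add_of_imp {f g h : ℝ → ℝ} {ε V : ℝ} (hV : 0 ≤ V)
    (hgf : ∀ x, g x ≤ 0 → f x ≤ 0 ∨ |h x| ≤ ε)
    (hvol : volume {x ∈ Set.Icc (-1 : ℝ) 1 | |h x| ≤ ε} ≤ ENNReal.ofReal V) :
    (volume {x ∈ Set.Icc (-1 : ℝ) 1 | g x ≤ 0}).toReal ≤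
      (volume {x ∈ Set.Icc (-1 : ℝ) 1 | f x ≤ 0}).toReal + V := by
  have hfin : volume {x ∈ Set.Icc (-1 : ℝ) 1 | f x ≤ 0} ≠ ⊤ :=
    measure_ne_top_of_subset (fun x hx => hx.1) measure_Icc_lt_top.ne
  have hsub : {x ∈ Set.Icc (-1 : ℝ) 1 | g x ≤ 0} ⊆
      {x ∈ Set.Icc (-1 : ℝ) 1 | f x ≤ 0} ∪ {x ∈ Set.Icc (-1 : ℝ) 1 | |h x| ≤ ε} :=
    fun x ⟨hx, hgx⟩ => (hgf x hgx).imp (fun hf => ⟨hx, hf⟩) fun hh => ⟨hx, hh⟩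
  have hle := (measure_mono hsub).trans ((measure_union_le _ _).trans (add_le_add_right hvol _))
  have hreal := ENNReal.toReal_mono (ENNReal.add_ne_top.2 ⟨hfin, ENNReal.ofReal_ne_top⟩) hle
  rwa [ENNReal.toReal_add hfin ENNReal.ofReal_ne_top, ENNReal.toReal_ofReal hV] at hreal

lemma abs_classRisk_sub_le {f g : ℝ → ℝ} {ε V : ℝ} (hV : 0 ≤ V) (hfg : ∀ x, |g x - f x| ≤ ε)
    (hvol : volume {x ∈ Set.Icc (-1 : ℝ) 1 | |f x| ≤ ε} ≤ ENNReal.ofReal V) :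
    |classRisk g - classRisk f| ≤ V / 2 := by
  have hgf : ∀ x, g x ≤ 0 → f x ≤ 0 ∨ |f x| ≤ ε := fun x hg =>
    (le_total (f x) 0).imp_right fun hf => abs_le.2 ⟨by linarith [abs_le.1 (hfg x)],
      by linarith [abs_le.1 (hfg x)]⟩
  have hfg' : ∀ x, f x ≤ 0 → g x ≤ 0 ∨ |f x| ≤ ε := fun x hf =>
    (le_total (g x) 0).imp_right fun hg => abs_le.2 ⟨by linarith [abs_le.1 (hfg x)],
      by linarith [abs_le.1 (hfg x)]⟩
  have hle := toReal_volume_le_add_of_imp hV hgf hvol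
  have hge := toReal_volume_le_add_of_imp hV hfg' hvol
  unfold classRisk
  rw [abs_le]
  constructor <;> linarith

lemma abs_classRisk_rfsFun_sub_le {n m B d : ℕ} (hB : B = 2 * (n * m) + 1) [NeZero d]
    (hn : n ≠ 0) {a c ρ : ℝ} (ha : 0 < a) (hc : 0 < c) (hρ₀ : 0 ≤ ρ) (hρ : ρ ≤ 1 / 2)
    {α : Fin B → ℝ} (hα : IsMinInterp n B (spikedWeights B a c) α) {W : Fin d → Fin B → ℝ}
    (hW : SampleCovClose (spikedWeights B a c) (Matrix.of W) ρ) {β : Fin d → ℝ}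
    (hβ : (∃ β', RFSInterpolates n B d W β') → IsMinRFSInterp n B d W β) :
    |classRisk (rfsFun B d W β) - classRisk (fun x => ∑ j, α j * phiF B x j)|
      ≤ 2 * √(2 * (a + m) * √(4 * ρ * n) + |1 - 2 * a| / (2 * m + 1)) := by
  subst hB
  rw [hα.eq_fourierSolution hn ha hc]
  have hvol := volume_abs_normalizedKernel_le (a := a) (m := m) hn (by positivity) √(4 * ρ * n)
  simp_rw [← fourierSolution_dotProduct_phiF hn hc.ne'] at hvol
  refine (abs_classRisk_sub_le (by positivity)
    (fun x => abs_rfsFun_sub_fourierSolution_le hn ha hc hρ₀ hρ hW hβ x) hvol).trans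
    (le_of_eq (by ring))

end RiskStability

section GramConcentration

variable {ι κ : Type*} {lam : ι → ℝ} {ρ : ℝ}

/-- The squared Frobenius norm of `Σ^{-1/2} E Σ^{-1/2}` for `Σ = diag lam`. -/
noncomputable def whitenedFrobeniusSq [Fintype ι] (lam : ι → ℝ) (E : Matrix ι ι ℝ) : ℝ :=
  mahalanobisSq (fun r : ι × ι => lam r.1 * lam r.2) fun r => E r.1 r.2

lemma sq_dotProduct_mulVec_le_whitenedFrobeniusSq [Fintype ι] (hlam : ∀ j, 0 < lam j)
    (E : Matrix ι ι ℝ) (v : ι → ℝ) :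
    (v ⬝ᵥ E *ᵥ v) ^ 2 ≤ whitenedFrobeniusSq lam E * varianceForm lam v ^ 2 := by
  have hquad : v ⬝ᵥ E *ᵥ v = (fun r : ι × ι => E r.1 r.2) ⬝ᵥ fun r => v r.1 * v r.2 := by
    simp only [dotProduct, Matrix.mulVec, Finset.mul_sum, Fintype.sum_prod_type]
    exact Finset.sum_congr rfl fun j _ => Finset.sum_congr rfl fun k _ => by ring
  have hvar : varianceForm (fun r : ι × ι => lam r.1 * lam r.2) (fun r => v r.1 * v r.2)
      = varianceForm lam v ^ 2 := by
    simp only [varianceForm, sq, Finset.sum_mul_sum, Fintype.sum_prod_type]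
    exact Finset.sum_congr rfl fun j _ => Finset.sum_congr rfl fun k _ => by ring
  rw [hquad, ← hvar]
  exact sq_dotProduct_le_mahalanobisSq_mul_varianceForm (fun r => mul_pos (hlam _) (hlam _)) _ _

variable [Fintype κ] [DecidableEq ι]

/-- The Gram error `Wᵀ W - d • diag lam` of a matrix `W` with `d` rows. -/
def gramError (lam : ι → ℝ) (W : Matrix κ ι ℝ) : Matrix ι ι ℝ :=
  Wᵀ * W - (Fintype.card κ : ℝ) • Matrix.diagonal lam

lemma dotProduct_gramError_mulVec [Fintype ι] (W : Matrix κ ι ℝ) (v : ι → ℝ) :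
    v ⬝ᵥ gramError lam W *ᵥ v
      = (W *ᵥ v) ⬝ᵥ (W *ᵥ v) - Fintype.card κ * varianceForm lam v := by
  have hdiag : v ⬝ᵥ Matrix.diagonal lam *ᵥ v = varianceForm lam v := by
    simp only [dotProduct, Matrix.mulVec_diagonal, varianceForm]
    exact Finset.sum_congr rfl fun j _ => by ring
  rw [gramError, Matrix.sub_mulVec, dotProduct_sub, Matrix.smul_mulVec, dotProduct_smul, hdiag,
    ← Matrix.mulVec_mulVec, Matrix.dotProduct_mulVec, Matrix.vecMul_transpose, smul_eq_mul]

lemma sampleCovClose_of_whitenedFrobeniusSq_le [Fintype ι] (hlam : ∀ j, 0 < lam j)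
    (hρ : 0 ≤ ρ) {W : Matrix κ ι ℝ}
    (hW : whitenedFrobeniusSq lam (gramError lam W) ≤ (ρ * Fintype.card κ) ^ 2) :
    SampleCovClose lam W ρ := by
  intro v
  have hvar : 0 ≤ varianceForm lam v := varianceForm_nonneg fun j => (hlam j).le
  rw [← dotProduct_gramError_mulVec]
  refine abs_le_of_sq_le_sq ?_ (by positivity)
  calc _ ≤ _ := sq_dotProduct_mulVec_le_whitenedFrobeniusSq hlam _ v
    _ ≤ (ρ * Fintype.card κ) ^ 2 * varianceForm lam v ^ 2 := by gcongr
    _ = _ := by ring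

/-- `ν` has uncorrelated coordinates with second moments `lam j` and fourth moments at most
`K * lam j ^ 2`. -/
structure HasDiagonalMoments (ν : Measure (ι → ℝ)) (lam : ι → ℝ) (K : ℝ) : Prop where
  memLp (j : ι) : MemLp (fun z : ι → ℝ => z j) 4 ν
  integral_mul (j k : ι) : ∫ z, z j * z k ∂ν = if j = k then lam j else 0
  integral_pow_four_le (j : ι) : ∫ z, z j ^ 4 ∂ν ≤ K * lam j ^ 2

namespace HasDiagonalMoments

variable {ν : Measure (ι → ℝ)} {K : ℝ}

lemma memLp_mul (h : HasDiagonalMoments ν lam K) (j k : ι) :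
    MemLp (fun z : ι → ℝ => z j * z k) 2 ν := by
  have : ENNReal.HolderTriple 4 4 2 := ⟨by
    rw [← two_mul, show (4 : ENNReal) = 2 * 2 by norm_num,
      ENNReal.mul_inv (by simp) (by simp), ← mul_assoc,
      ENNReal.mul_inv_cancel (by simp) (by simp), one_mul]⟩
  exact (h.memLp k).mul (h.memLp j)

lemma variance_mul_le [IsProbabilityMeasure ν] (h : HasDiagonalMoments ν lam K)
    (hlam : ∀ j, 0 < lam j) (j k : ι) :
    variance (fun z : ι → ℝ => z j * z k) ν ≤ K * (lam j * lam k) := by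
  have hj := hlam j
  have hk := hlam k
  have hint (j : ι) : Integrable (fun z : ι → ℝ => z j ^ 4) ν :=
    (h.memLp_mul j j).integrable_sq.congr (ae_of_all _ fun z => by ring)
  have hamgm (z : ι → ℝ) :
      (z j * z k) ^ 2 ≤ lam k / (2 * lam j) * z j ^ 4 + lam j / (2 * lam k) * z k ^ 4 := by
    have hsq : lam k / (2 * lam j) * z j ^ 4 + lam j / (2 * lam k) * z k ^ 4 - (z j * z k) ^ 2
        = (lam k * z j ^ 2 - lam j * z k ^ 2) ^ 2 / (2 * lam j * lam k) := by
      field_simp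
      ring
    have : 0 ≤ (lam k * z j ^ 2 - lam j * z k ^ 2) ^ 2 / (2 * lam j * lam k) := by positivity
    linarith
  refine (variance_le_expectation_sq (by fun_prop)).trans ?_
  calc ∫ z, (z j * z k) ^ 2 ∂ν
      ≤ ∫ z, (lam k / (2 * lam j) * z j ^ 4 + lam j / (2 * lam k) * z k ^ 4) ∂ν :=
        integral_mono (h.memLp_mul j k).integrable_sq
          (((hint j).const_mul _).add ((hint k).const_mul _)) hamgm
    _ = lam k / (2 * lam j) * (∫ z, z j ^ 4 ∂ν) + lam j / (2 * lam k) * ∫ z, z k ^ 4 ∂ν := by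
        rw [integral_add ((hint j).const_mul _) ((hint k).const_mul _), integral_const_mul,
          integral_const_mul]
    _ ≤ lam k / (2 * lam j) * (K * lam j ^ 2) + lam j / (2 * lam k) * (K * lam k ^ 2) := by
        gcongr
        exacts [h.integral_pow_four_le j, h.integral_pow_four_le k]
    _ = K * (lam j * lam k) := by
        field_simp
        ring

variable [IsProbabilityMeasure ν]

lemma memLp_gramError (h : HasDiagonalMoments ν lam K) (j k : ι) :
    MemLp (fun W : κ → ι → ℝ => gramError lam (Matrix.of W) j k) 2 (Measure.pi fun _ => ν) :=
  (memLp_finsetSum _ fun i _ => (h.memLp_mul j k).comp_measurePreserving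
    (measurePreserving_eval (fun _ : κ => ν) i)).sub (memLp_const _)

lemma integral_sum_mul (h : HasDiagonalMoments ν lam K) (j k : ι) :
    ∫ W, ∑ i, W i j * W i k ∂(Measure.pi fun _ : κ => ν)
      = Fintype.card κ * if j = k then lam j else 0 := by
  have hmeas := (h.memLp_mul j k).aestronglyMeasurable
  rw [integral_finsetSum]
  · simp only [integral_comp_eval (μ := fun _ : κ => ν) hmeas, h.integral_mul, Finset.sum_const,
      Finset.card_univ, nsmul_eq_mul]
  · exact fun i _ => integrable_comp_eval (μ := fun _ : κ => ν)
      ((h.memLp_mul j k).integrable (by norm_num))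

lemma integral_gramError_sq_le (h : HasDiagonalMoments ν lam K) (hlam : ∀ j, 0 < lam j) (j k : ι) :
    ∫ W, gramError lam (Matrix.of W) j k ^ 2 ∂(Measure.pi fun _ : κ => ν)
      ≤ Fintype.card κ * (K * (lam j * lam k)) := by
  have hcentred (W : κ → ι → ℝ) : gramError lam (Matrix.of W) j k = ∑ i, W i j * W i k
      - ∫ W, ∑ i, W i j * W i k ∂(Measure.pi fun _ : κ => ν) := by
    rw [h.integral_sum_mul]
    simp [gramError, Matrix.mul_apply, Matrix.diagonal_apply]
  simp only [hcentred]
  rw [← variance_eq_integral (by fun_prop)]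
  have hsum := variance_sum_pi (μ := fun _ : κ => ν) (X := fun _ z => z j * z k)
    fun _ => h.memLp_mul j k
  rw [show (∑ i : κ, fun W : κ → ι → ℝ => W i j * W i k) = fun W => ∑ i, W i j * W i k by
    ext W; simp] at hsum
  rw [hsum, Finset.sum_const, Finset.card_univ, nsmul_eq_mul]
  gcongr
  exact h.variance_mul_le hlam j k

lemma integrable_gramError_sq_div (h : HasDiagonalMoments ν lam K) (r : ι × ι) :
    Integrable (fun W : κ → ι → ℝ => gramError lam (Matrix.of W) r.1 r.2 ^ 2
      / (lam r.1 * lam r.2)) (Measure.pi fun _ => ν) :=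
  (h.memLp_gramError r.1 r.2).integrable_sq.div_const _

lemma integral_whitenedFrobeniusSq_gramError_le [Fintype ι]
    (h : HasDiagonalMoments ν lam K) (hlam : ∀ j, 0 < lam j) :
    ∫ W, whitenedFrobeniusSq lam (gramError lam (Matrix.of W)) ∂(Measure.pi fun _ : κ => ν)
      ≤ Fintype.card ι ^ 2 * (Fintype.card κ * K) := by
  simp only [whitenedFrobeniusSq, mahalanobisSq]
  rw [integral_finsetSum _ fun r _ => h.integrable_gramError_sq_div r]
  calc _ ≤ ∑ _r : ι × ι, Fintype.card κ * K := Finset.sum_le_sum fun r _ => by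
        rw [integral_div, div_le_iff₀ (mul_pos (hlam _) (hlam _)), mul_assoc]
        exact h.integral_gramError_sq_le hlam r.1 r.2
    _ = _ := by
        rw [Finset.sum_const, Finset.card_univ, Fintype.card_prod, nsmul_eq_mul]
        push_cast
        ring

lemma measure_not_sampleCovClose_le [Fintype ι] [Nonempty κ]
    (h : HasDiagonalMoments ν lam K) (hlam : ∀ j, 0 < lam j) (hρ : 0 < ρ) :
    (Measure.pi fun _ : κ => ν) {W | ¬ SampleCovClose lam (Matrix.of W) ρ}
      ≤ ENNReal.ofReal (K * (Fintype.card ι ^ 2 / (Fintype.card κ * ρ ^ 2))) := by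
  have : (0 : ℝ) < Fintype.card κ := by exact_mod_cast Fintype.card_pos
  have hpos : 0 < (ρ * Fintype.card κ) ^ 2 := by positivity
  have hmarkov := mul_meas_ge_le_integral_of_nonneg
    (μ := Measure.pi fun _ : κ => ν)
    (f := fun W => whitenedFrobeniusSq lam (gramError lam (Matrix.of W)))
    (ae_of_all _ fun W => mahalanobisSq_nonneg fun r => (mul_pos (hlam _) (hlam _)).le)
    (integrable_finsetSum _ fun r _ => h.integrable_gramError_sq_div r)
    ((ρ * Fintype.card κ) ^ 2)
  have hreal := hmarkov.trans (h.integral_whitenedFrobeniusSq_gramError_le hlam)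
  rw [mul_comm, ← le_div_iff₀ hpos] at hreal
  refine (measure_mono (t := {W : κ → ι → ℝ | (ρ * Fintype.card κ) ^ 2
    ≤ whitenedFrobeniusSq lam (gramError lam (Matrix.of W))}) fun W hW => ?_).trans ?_
  · by_contra hlt
    exact hW (sampleCovClose_of_whitenedFrobeniusSq_le hlam hρ.le (not_le.1 hlt).le)
  · rw [← ENNReal.ofReal_toReal (measure_ne_top (Measure.pi fun _ : κ => ν) _)]
    refine ENNReal.ofReal_le_ofReal (hreal.trans (le_of_eq ?_))
    field_simp

end HasDiagonalMoments

end GramConcentration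

section GaussianRows

/-- The fourth moment of a standard real Gaussian. -/
noncomputable def gaussianFourthMoment : ℝ := ∫ x, x ^ 4 ∂(gaussianReal 0 1)

lemma integral_pow_four_gaussianReal (v : NNReal) :
    ∫ x, x ^ 4 ∂(gaussianReal 0 v) = gaussianFourthMoment * v ^ 2 := by
  have hscale : (gaussianReal 0 1).map (√v * ·) = gaussianReal 0 v := by
    rw [gaussianReal_map_const_mul]
    congr 1
    · simp
    · ext
      simp
  rw [← hscale, integral_map (by fun_prop) (by fun_prop), gaussianFourthMoment,
    ← integral_mul_const]
  refine integral_congr_ae (ae_of_all _ fun x => ?_)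
  have hsqrt : √(v : ℝ) ^ 4 = v ^ 2 := by rw [pow_mul √(v : ℝ) 2 2, Real.sq_sqrt v.coe_nonneg]
  simp only [mul_pow, hsqrt]
  ring

lemma integral_mul_self_gaussianReal (v : NNReal) : ∫ x, x * x ∂(gaussianReal 0 v) = v := by
  have hvar := variance_fun_id_gaussianReal (μ := 0) (v := v)
  rw [variance_eq_integral (by fun_prop), integral_id_gaussianReal] at hvar
  simpa only [sub_zero, sq] using hvar

lemma hasDiagonalMoments_pi_gaussianReal {ι : Type*} [Fintype ι] [DecidableEq ι] {lam : ι → ℝ}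
    (hlam : ∀ j, 0 ≤ lam j) :
    HasDiagonalMoments (Measure.pi fun j => gaussianReal 0 (lam j).toNNReal) lam
      gaussianFourthMoment := by
  have hlaw (j : ι) {f : ℝ → ℝ} (hf : Measurable f) :
      ∫ z : ι → ℝ, f (z j) ∂(Measure.pi fun j => gaussianReal 0 (lam j).toNNReal)
        = ∫ x, f x ∂(gaussianReal 0 (lam j).toNNReal) :=
    integral_comp_eval hf.aestronglyMeasurable
  refine ⟨fun j => ?_, fun j k => ?_, fun j => le_of_eq ?_⟩
  · exact (memLp_id_gaussianReal' 4 (by simp)).comp_measurePreserving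
      (measurePreserving_eval (fun j => gaussianReal 0 (lam j).toNNReal) j)
  · split_ifs with hjk
    · subst hjk
      rw [hlaw j (f := fun x => x * x) (by fun_prop), integral_mul_self_gaussianReal,
        Real.coe_toNNReal _ (hlam j)]
    · have hind := (iIndepFun_pi (μ := fun j => gaussianReal 0 (lam j).toNNReal)
        (X := fun _ => id) fun _ => aemeasurable_id).indepFun hjk
      have hprod := hind.integral_fun_mul_eq_mul_integral
        (measurable_pi_apply j).aestronglyMeasurable (measurable_pi_apply k).aestronglyMeasurable
      simp only [id] at hprod
      rw [hprod, hlaw j (f := fun x => x) (by fun_prop), integral_id_gaussianReal, zero_mul]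
  · rw [hlaw j (f := fun x => x ^ 4) (by fun_prop), integral_pow_four_gaussianReal,
      Real.coe_toNNReal _ (hlam j)]

end GaussianRows

section BilevelRisk

variable {n m B d : ℕ} {q ε : ℝ}

/-- The ratio `a / m` when the bilevel weights with `B = 2nm + 1` are written as
`spikedWeights B a c`. -/
noncomputable def spikeRatio (n : ℕ) (q : ℝ) : ℝ := n * (n : ℝ) ^ (-q) / (1 - (n : ℝ) ^ (-q))

lemma rpow_neg_lt_one_of_two_le (hn : 2 ≤ n) (hq : 0 < q) : (n : ℝ) ^ (-q) < 1 :=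
  Real.rpow_lt_one_of_one_lt_of_neg (by exact_mod_cast hn) (neg_lt_zero.2 hq)

lemma spikeRatio_pos (hn : 2 ≤ n) (hq : 0 < q) : 0 < spikeRatio n q := by
  have hγ := sub_pos.2 (rpow_neg_lt_one_of_two_le hn hq)
  have : (0 : ℝ) < n := by positivity
  unfold spikeRatio
  positivity

lemma tendsto_spikeRatio (hq : 1 < q) : Tendsto (fun n : ℕ => spikeRatio n q) atTop (𝓝 0) := by
  have hpow {r : ℝ} (hr : 0 < r) : Tendsto (fun n : ℕ => (n : ℝ) ^ (-r)) atTop (𝓝 0) :=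
    (tendsto_rpow_neg_atTop hr).comp tendsto_natCast_atTop_atTop
  have hnum : Tendsto (fun n : ℕ => n * (n : ℝ) ^ (-q)) atTop (𝓝 0) := by
    refine (hpow (sub_pos.2 hq)).congr fun n => ?_
    rw [← Real.rpow_one_add' (Nat.cast_nonneg n) (by linarith)]
    ring_nf
  have hden := (hpow (zero_lt_one.trans hq)).const_sub 1
  rw [sub_zero] at hden
  have hlim := hnum.div hden one_ne_zero
  rw [zero_div] at hlim
  exact hlim

lemma bilevelLam_eq_spikedWeights (hB : B = 2 * (n * m) + 1) (hn : 2 ≤ n) (hm : 0 < m)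
    (hq : 0 < q) :
    bilevelLam n B q
      = spikedWeights B (spikeRatio n q * m) ((1 - (n : ℝ) ^ (-q)) * B / (B - 1)) := by
  have hγ := (sub_pos.2 (rpow_neg_lt_one_of_two_le hn hq)).ne'
  have hB' : (B : ℝ) - 1 = 2 * (n * m) := by rw [hB]; push_cast; ring
  have hn' : (n : ℝ) ≠ 0 := by positivity
  have hm' : (m : ℝ) ≠ 0 := by positivity
  funext j
  unfold bilevelLam spikedWeights spikeRatio
  rw [hB']
  split_ifs
  · field_simp
  · rw [mul_one]

lemma exists_bilevelLam_eq_spikedWeights (hB : B = 2 * (n * m) + 1) (hn : 2 ≤ n) (hm : 0 < m)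
    (hq : 0 < q) :
    ∃ c > 0, bilevelLam n B q = spikedWeights B (spikeRatio n q * m) c := by
  refine ⟨_, ?_, bilevelLam_eq_spikedWeights hB hn hm hq⟩
  have hγ := sub_pos.2 (rpow_neg_lt_one_of_two_le hn hq)
  have hB' : (0 : ℝ) < B - 1 := by rw [hB]; push_cast; rw [add_sub_cancel_right]; positivity
  have : (0 : ℝ) < B := by linarith
  positivity

/-- Bound on the risk gap for the bilevel ensemble when the sample covariance of the RFS weights
has relative error at most `ε² / (n m²)`, where `B = 2nm + 1`. -/
noncomputable def riskGapBound (n B : ℕ) (q ε : ℝ) : ℝ :=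
  2 * √(4 * ε * (1 + spikeRatio n q) + (n / B + spikeRatio n q))

lemma tendsto_riskGapBound (hq : 1 < q) {B : ℕ → ℕ}
    (hB : (fun n : ℕ => (n : ℝ)) =o[atTop] fun n => (B n : ℝ)) :
    Tendsto (fun n => riskGapBound n (B n) q ε) atTop (𝓝 (2 * √(4 * ε))) := by
  have hκ := tendsto_spikeRatio hq
  have hlim := (((hκ.const_add 1).const_mul (4 * ε)).add
    (hB.tendsto_div_nhds_zero.add hκ)).sqrt.const_mul 2
  simp only [add_zero, mul_one] at hlim
  exact hlim

lemma abs_classRisk_rfsFun_sub_le_riskGapBound [NeZero d] (hB : B = 2 * (n * m) + 1) (hn : 2 ≤ n)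
    (hm : 0 < m) (hq : 0 < q) (hε₀ : 0 < ε) (hε : ε ≤ 1) {α : Fin B → ℝ}
    (hα : IsMinInterp n B (bilevelLam n B q) α) {W : Fin d → Fin B → ℝ}
    (hW : SampleCovClose (bilevelLam n B q) (Matrix.of W) (ε ^ 2 / (n * m ^ 2)))
    {β : Fin d → ℝ} (hβ : (∃ β', RFSInterpolates n B d W β') → IsMinRFSInterp n B d W β) :
    |classRisk (rfsFun B d W β) - classRisk (fun x => ∑ j, α j * phiF B x j)|
      ≤ riskGapBound n B q ε := by
  obtain ⟨c, hc, hlam⟩ := exists_bilevelLam_eq_spikedWeights hB hn hm hq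
  rw [hlam] at hα hW
  have hκ := spikeRatio_pos hn hq
  have hn₂ : (2 : ℝ) ≤ n := by exact_mod_cast hn
  have hm₁ : (1 : ℝ) ≤ m := by exact_mod_cast hm
  have hBcast : (B : ℝ) = 2 * (n * m) + 1 := by rw [hB]; push_cast; rfl
  have hρ : ε ^ 2 / (n * m ^ 2) ≤ 1 / 2 := by
    calc ε ^ 2 / (n * m ^ 2) ≤ 1 ^ 2 / (2 * 1 ^ 2) := by gcongr
      _ = 1 / 2 := by norm_num
  have hsqrt : √(4 * (ε ^ 2 / (n * m ^ 2)) * n) = 2 * ε / m := by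
    rw [show 4 * (ε ^ 2 / (n * m ^ 2)) * n = (2 * ε / m) ^ 2 by field_simp; norm_num]
    exact Real.sqrt_sq (by positivity)
  have hdist : 2 * (spikeRatio n q * m + m) * (2 * ε / m) = 4 * ε * (1 + spikeRatio n q) := by
    field_simp
    ring
  have hmean : |1 - 2 * (spikeRatio n q * m)| / (2 * m + 1) ≤ n / B + spikeRatio n q := by
    rw [div_le_iff₀ (by positivity)]
    have hone : 1 ≤ n / B * (2 * m + 1 : ℝ) := by
      rw [div_mul_eq_mul_div, hBcast, one_le_div₀ (by positivity)]
      linarith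
    have : 0 < spikeRatio n q * m := by positivity
    refine abs_le.2 ⟨?_, ?_⟩ <;> linarith
  refine (abs_classRisk_rfsFun_sub_le hB (by lia) (by positivity) hc (by positivity) hρ hα hW
    hβ).trans ?_
  rw [hsqrt, hdist, riskGapBound]
  gcongr

lemma bilevelLam_pos (hB : B = 2 * (n * m) + 1) (hn : 2 ≤ n) (hm : 0 < m) (hq : 0 < q)
    (j : Fin B) : 0 < bilevelLam n B q j := by
  obtain ⟨c, hc, hlam⟩ := exists_bilevelLam_eq_spikedWeights hB hn hm hq
  rw [hlam]
  have := spikeRatio_pos hn hq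
  exact spikedWeights_pos (by positivity) hc j

lemma rfsMeasure_not_sampleCovClose_le [NeZero d] (hB : B = 2 * (n * m) + 1) (hn : 2 ≤ n)
    (hm : 0 < m) (hq : 0 < q) (hε : 0 < ε) :
    rfsMeasure n B d q
        {W | ¬ SampleCovClose (bilevelLam n B q) (Matrix.of W) (ε ^ 2 / (n * m ^ 2))}
      ≤ ENNReal.ofReal (gaussianFourthMoment / (16 * ε ^ 4) * (B ^ 6 / (n ^ 2 * d))) := by
  have hlam := bilevelLam_pos hB hn hm hq
  have : (0 : ℝ) < n := by positivity
  have : (0 : ℝ) < d := by exact_mod_cast Nat.pos_of_neZero d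
  refine ((hasDiagonalMoments_pi_gaussianReal fun j => (hlam j).le).measure_not_sampleCovClose_le
    hlam (by positivity)).trans (ENNReal.ofReal_le_ofReal ?_)
  have hmB : 2 * (n * m : ℝ) ≤ B := by rw [hB]; push_cast; linarith
  have hK : 0 ≤ gaussianFourthMoment := integral_nonneg fun x => by positivity
  rw [Fintype.card_fin, Fintype.card_fin]
  calc gaussianFourthMoment * (B ^ 2 / (d * (ε ^ 2 / (n * m ^ 2)) ^ 2))
      = gaussianFourthMoment / (16 * ε ^ 4) * (B ^ 2 * (2 * (n * m)) ^ 4 / (n ^ 2 * d)) := by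
        field_simp
        norm_num
    _ ≤ gaussianFourthMoment / (16 * ε ^ 4) * (B ^ 2 * B ^ 4 / (n ^ 2 * d)) := by gcongr
    _ = _ := by ring

lemma rfsMeasure_lt_abs_classRisk_sub_le [NeZero d] (hB : B = 2 * (n * m) + 1) (hn : 2 ≤ n)
    (hm : 0 < m) (hq : 0 < q) (hε₀ : 0 < ε) (hε : ε ≤ 1) {α : Fin B → ℝ}
    (hα : IsMinInterp n B (bilevelLam n B q) α) {β : (Fin d → Fin B → ℝ) → Fin d → ℝ}
    (hβ : ∀ W, (∃ β', RFSInterpolates n B d W β') → IsMinRFSInterp n B d W (β W)) {δ : ℝ}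
    (hδ : riskGapBound n B q ε ≤ δ) :
    rfsMeasure n B d q {W | δ < |classRisk (rfsFun B d W (β W)) -
        classRisk (fun x => ∑ j, α j * phiF B x j)|}
      ≤ ENNReal.ofReal (gaussianFourthMoment / (16 * ε ^ 4) * (B ^ 6 / (n ^ 2 * d))) := by
  refine (measure_mono fun W hgap hW => ?_).trans
    (rfsMeasure_not_sampleCovClose_le hB hn hm hq hε₀)
  exact hgap.not_ge ((abs_classRisk_rfsFun_sub_le_riskGapBound hB hn hm hq hε₀ hε hα hW
    (hβ W)).trans hδ)

end BilevelRisk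

section Growth

variable {p T : ℝ} {B d : ℕ → ℕ}

lemma isLittleO_natCast_rpow {r s : ℝ} (hrs : r < s) :
    (fun n : ℕ => (n : ℝ) ^ r) =o[atTop] fun n : ℕ => (n : ℝ) ^ s := by
  refine (isLittleO_iff_tendsto' ?_).2 ?_
  · filter_upwards [eventually_gt_atTop 0] with n hn hzero
    exact absurd hzero (by positivity)
  · refine ((tendsto_rpow_neg_atTop (sub_pos.2 hrs)).comp tendsto_natCast_atTop_atTop).congr' ?_
    filter_upwards [eventually_gt_atTop 0] with n hn
    rw [← Real.rpow_sub (by exact_mod_cast hn), Function.comp_apply, neg_sub]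

lemma isEquivalent_rpow_of_abs_sub_le {u : ℕ → ℝ} {r s : ℝ} (hrs : r < s)
    (hu : ∀ᶠ n : ℕ in atTop, |u n - (n : ℝ) ^ s| ≤ (n : ℝ) ^ r) :
    u ~[atTop] fun n : ℕ => (n : ℝ) ^ s := by
  refine (IsBigO.of_bound 1 ?_).trans_isLittleO (isLittleO_natCast_rpow hrs)
  filter_upwards [hu] with n hn
  rw [one_mul, Real.norm_eq_abs, Real.norm_eq_abs]
  exact hn.trans (le_abs_self _)

lemma isEquivalent_bilevelB (hp : 1 < p) (hB : ∀ n, 2 ≤ n → BilevelB n (B n) p) :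
    (fun n => (B n : ℝ)) ~[atTop] fun n : ℕ => (n : ℝ) ^ p :=
  isEquivalent_rpow_of_abs_sub_le hp <| eventually_atTop.2
    ⟨2, fun n hn => by simpa only [Real.rpow_one] using (hB n hn).2.2⟩

lemma isLittleO_natCast_bilevelB (hp : 1 < p) (hB : ∀ n, 2 ≤ n → BilevelB n (B n) p) :
    (fun n : ℕ => (n : ℝ)) =o[atTop] fun n => (B n : ℝ) := by
  simpa only [Real.rpow_one] using
    (isLittleO_natCast_rpow hp).trans_isBigO (isEquivalent_bilevelB hp hB).isBigO_symm

lemma isLittleO_bilevelB_pow_six (hp : 1 < p) (hT : 6 * p - 2 < T)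
    (hB : ∀ n, 2 ≤ n → BilevelB n (B n) p)
    (hd : ∀ n, 2 ≤ n → |(d n : ℝ) - (n : ℝ) ^ T| ≤ 1) :
    (fun n => (B n : ℝ) ^ 6) =o[atTop] fun n => (n : ℝ) ^ 2 * d n := by
  have hd' : (fun n => (d n : ℝ)) ~[atTop] fun n : ℕ => (n : ℝ) ^ T :=
    isEquivalent_rpow_of_abs_sub_le (by linarith : 0 < T) <| eventually_atTop.2
      ⟨2, fun n hn => by simpa only [Real.rpow_zero] using hd n hn⟩
  have hrpow : (fun n : ℕ => ((n : ℝ) ^ p) ^ 6) =o[atTop] fun n => (n : ℝ) ^ 2 * (n : ℝ) ^ T := by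
    refine (isLittleO_natCast_rpow (r := p * 6) (s := 2 + T) (by linarith)).congr'
      (Eventually.of_forall fun n => ?_) ?_
    · exact_mod_cast Real.rpow_mul_natCast (Nat.cast_nonneg n) p 6
    · filter_upwards [eventually_gt_atTop 0] with n hn
      rw [Real.rpow_add (by exact_mod_cast hn), Real.rpow_two]
  exact ((isEquivalent_bilevelB hp hB).pow 6).isBigO.trans_isLittleO <|
    hrpow.trans_isBigO (IsEquivalent.refl.mul hd').isBigO_symm

end Growth

section Convergence

lemma exists_eq_two_mul_mul_add_one {n B : ℕ} (hdvd : 2 * n ∣ B - 1) (hnB : n < B) (hn : 0 < n) :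
    ∃ m > 0, B = 2 * (n * m) + 1 := by
  obtain ⟨m, hm⟩ := hdvd
  have hB : B = 2 * (n * m) + 1 := by lia
  refine ⟨m, Nat.pos_of_ne_zero fun hm₀ => ?_, hB⟩
  subst hm₀
  lia

lemma exists_pos_le_one_two_mul_sqrt_lt {δ : ℝ} (hδ : 0 < δ) :
    ∃ ε : ℝ, 0 < ε ∧ ε ≤ 1 ∧ 2 * √(4 * ε) < δ := by
  have hcont : Tendsto (fun ε : ℝ => 2 * √(4 * ε)) (𝓝[>] 0) (𝓝 (2 * √(4 * 0))) :=
    (Continuous.tendsto (by fun_prop) 0).mono_left nhdsWithin_le_nhds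
  have hlt := hcont.eventually_lt_const (u := δ) (by simpa using hδ)
  obtain ⟨ε, ⟨hε, hε₀, hε₁⟩⟩ := (hlt.and (Ioc_mem_nhdsGT zero_lt_one)).exists
  exact ⟨ε, hε₀, hε₁, hε⟩

theorem stmt_9_general {q : ℝ} (hq : 1 < q) {B d : ℕ → ℕ}
    (hdvd : ∀ᶠ n in atTop, 2 * n ∣ B n - 1)
    (hB : (fun n : ℕ => (n : ℝ)) =o[atTop] fun n => (B n : ℝ))
    (hd : (fun n => (B n : ℝ) ^ 6) =o[atTop] fun n => (n : ℝ) ^ 2 * d n)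
    {αhat : (n : ℕ) → Fin (B n) → ℝ}
    (hα : ∀ᶠ n in atTop, IsMinInterp n (B n) (bilevelLam n (B n) q) (αhat n))
    {βhat : (n : ℕ) → (Fin (d n) → Fin (B n) → ℝ) → Fin (d n) → ℝ}
    (hβ : ∀ᶠ n in atTop, ∀ W, (∃ β, RFSInterpolates n (B n) (d n) W β) →
      IsMinRFSInterp n (B n) (d n) W (βhat n W)) {δ : ℝ} (hδ : 0 < δ) :
    Tendsto (fun n => rfsMeasure n (B n) (d n) q
      {W | δ < |classRisk (rfsFun (B n) (d n) W (βhat n W)) -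
        classRisk (fun x => ∑ j, αhat n j * phiF (B n) x j)|}) atTop (𝓝 0) := by
  obtain ⟨ε, hε₀, hε₁, hε⟩ := exists_pos_le_one_two_mul_sqrt_lt hδ
  have hprob : Tendsto (fun n : ℕ => ENNReal.ofReal
      (gaussianFourthMoment / (16 * ε ^ 4) * ((B n : ℝ) ^ 6 / (n ^ 2 * d n)))) atTop (𝓝 0) := by
    simpa only [mul_zero, ENNReal.ofReal_zero] using
      ENNReal.tendsto_ofReal (hd.tendsto_div_nhds_zero.const_mul _)
  refine tendsto_of_tendsto_of_tendsto_of_le_of_le' tendsto_const_nhds hprob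
    (Eventually.of_forall fun n => zero_le) ?_
  filter_upwards [eventually_ge_atTop 2, hdvd, hα, hβ, hB.def one_half_pos, hd.def one_pos,
    (tendsto_riskGapBound hq hB).eventually_lt_const hε] with n hn hdvd hα hβ hnB hBd hgap
  rw [Real.norm_natCast, Real.norm_natCast] at hnB
  have hn₀ : (0 : ℝ) < n := by positivity
  have hnB' : (n : ℝ) < B n := by linarith
  obtain ⟨m, hm, hBm⟩ := exists_eq_two_mul_mul_add_one hdvd (by exact_mod_cast hnB') (by lia)
  have : NeZero (d n) := ⟨fun hd₀ => by
    have hB₀ : (0 : ℝ) < (B n : ℝ) ^ 6 := pow_pos (hn₀.trans hnB') 6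
    rw [hd₀, Nat.cast_zero, mul_zero, norm_zero, mul_zero, Real.norm_of_nonneg hB₀.le] at hBd
    exact hBd.not_gt hB₀⟩
  exact rfsMeasure_lt_abs_classRisk_sub_le hBm hn hm (by linarith) hε₀ hε₁ hα hβ hgap.le

end Convergence

/-- **RFS classification risk converges to the Fourier classification risk.**  Fix
`p, q > 1` and `T > 6p - 1`.  With `d = n^T` RFS features whose Gaussian weight vectors
are i.i.d. `N(0, Σ(n,p,q))`, the classification risk of the minimum-`ℓ₂`-norm RFS
interpolator `ĝ_n` converges in probability to that of the Fourier interpolator `f̂_n`: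
for every `δ > 0`, `P(|C(ĝ_n) - C(f̂_n)| > δ) → 0` as `n → ∞`. -/
theorem stmt_9 (p q T : ℝ) (hp : 1 < p) (hq : 1 < q) (hT : 6 * p - 1 < T)
    (B d : ℕ → ℕ)
    (hB : ∀ n : ℕ, 2 ≤ n → BilevelB n (B n) p)
    (hd : ∀ n : ℕ, 2 ≤ n → |(d n : ℝ) - (n : ℝ) ^ T| ≤ 1)
    (αhat : (n : ℕ) → Fin (B n) → ℝ)
    (hα : ∀ n : ℕ, 2 ≤ n → IsMinInterp n (B n) (bilevelLam n (B n) q) (αhat n))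
    (βhat : (n : ℕ) → (Fin (d n) → Fin (B n) → ℝ) → Fin (d n) → ℝ)
    (hβ : ∀ n : ℕ, 2 ≤ n → ∀ W : Fin (d n) → Fin (B n) → ℝ,
      (∃ β, RFSInterpolates n (B n) (d n) W β) →
        RFSInterpolates n (B n) (d n) W (βhat n W) ∧
        ∀ β : Fin (d n) → ℝ, RFSInterpolates n (B n) (d n) W β →
          ∑ i, (βhat n W i) ^ 2 ≤ ∑ i, (β i) ^ 2) :
    ∀ δ : ℝ, 0 < δ →
      Tendsto (fun n : ℕ =>
          rfsMeasure n (B n) (d n) q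
            {W | δ < |classRisk (rfsFun (B n) (d n) W (βhat n W)) -
                classRisk (fun x => ∑ j, αhat n j * phiF (B n) x j)|})
        atTop (nhds 0) := by
  intro δ hδ
  have eventually_of_two_le {P : ℕ → Prop} (h : ∀ n, 2 ≤ n → P n) : ∀ᶠ n in atTop, P n :=
    eventually_atTop.2 ⟨2, h⟩
  exact stmt_9_general hq (eventually_of_two_le fun n hn => (hB n hn).2.1)
    (isLittleO_natCast_bilevelB hp hB)
    (isLittleO_bilevelB_pow_six hp (by linarith) hB hd)
    (eventually_of_two_le hα) (eventually_of_two_le hβ) hδ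
end
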